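/- For every prime p, every integer N ≥ 2, and every β ∈ ℂ with Re(β) > −2/N, the integral Z_N(ℙ¹(ℚ_p), β) converges absolutely and Z_N(ℙ¹(ℚ_p), β) = N! · Σ_{k=0}^{N} [cosh((log p / 2)·(N + (N(N−1)/2)β)·(1 − 2k/N)) / (2·cosh(log p / 2))^N] · F_{N−k}(log p, β) · F_k(log p, β). -/

import Mathlib

open MeasureTheory
open scoped LinearAlgebra.Projectivization

namespace LogCoulomb

noncomputable section

/-! ### The projective line over `ℚ_p`, its spherical metric and `PGL₂`-invariant measure -/

variable (p : ℕ) [Fact p.Prime]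

instance : MeasurableSpace ℚ_[p] := borel _
instance : BorelSpace ℚ_[p] := ⟨rfl⟩

/-- The projective line over `ℚ_p`. -/
abbrev P1 := ℙ ℚ_[p] (Fin 2 → ℚ_[p])

instance : TopologicalSpace (P1 p) :=
  inferInstanceAs (TopologicalSpace (Quotient _))

instance : MeasurableSpace (P1 p) := borel _
instance : BorelSpace (P1 p) := ⟨rfl⟩

/-- Spherical distance on homogeneous coordinates:
`δ((x₀,x₁),(y₀,y₁)) = |x₀y₁ - x₁y₀| / (max(|x₀|,|x₁|) ⬝ max(|y₀|,|y₁|))`. -/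
def sdelta (x y : Fin 2 → ℚ_[p]) : ℝ :=
  ‖x 0 * y 1 - x 1 * y 0‖ / (max ‖x 0‖ ‖x 1‖ * max ‖y 0‖ ‖y 1‖)

/-- The spherical metric on `ℙ¹(ℚ_p)`, defined via the canonical representatives. -/
def pdelta (ξ η : P1 p) : ℝ := sdelta p ξ.rep η.rep

open Classical in
/-- The action of a matrix on `ℙ¹(ℚ_p)`: `[x₀:x₁] ↦ [a x₀ + b x₁ : c x₀ + d x₁]`
(well-defined, and given by the first branch of the `if`, whenever `A` is invertible). -/
def mobius (A : Matrix (Fin 2) (Fin 2) ℚ_[p]) (ξ : P1 p) : P1 p :=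
  if h : A.mulVec ξ.rep ≠ 0 then Projectivization.mk ℚ_[p] (A.mulVec ξ.rep) h else ξ

/-- `ν` is invariant under the action of `GL₂(ℤ_p)` on `ℙ¹(ℚ_p)`; membership of the matrix
entries in `ℤ_p`, and invertibility of the matrix over `ℤ_p`, are phrased via the `p`-adic
norm on `ℚ_p`. -/
def IsGLInvariant (ν : Measure (P1 p)) : Prop :=
  ∀ A : Matrix (Fin 2) (Fin 2) ℚ_[p],
    (∀ i j, ‖A i j‖ ≤ 1) → ‖A.det‖ = 1 →
      ∀ M : Set (P1 p), MeasurableSet M → ν (mobius p A '' M) = ν M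

/-- The embedding `ι : ℚ_p → ℙ¹(ℚ_p)`, `x ↦ [x : 1]`. -/
def iota (x : ℚ_[p]) : P1 p :=
  Projectivization.mk ℚ_[p] ![x, 1] (by
    intro h
    have h1 := congrFun h 1
    simp at h1)

/-! ### Canonical partition functions -/

/-- The pairs `(i,j)` with `i < j`. -/
def pairs (N : ℕ) : Finset (Fin N × Fin N) := Finset.univ.filter fun q => q.1 < q.2

/-- The closed unit ball `ℤ_p = R` inside `ℚ_p`. -/
def Zball : Set ℚ_[p] := {x | ‖x‖ ≤ 1}

/-- The open unit ball `pℤ_p = P` inside `ℚ_p`. -/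
def Pball : Set ℚ_[p] := {x | ‖x‖ < 1}

/-- The one-component canonical partition function
`Z_N(X, β) = ∫_{X^N} ∏_{i<j} |x_i - x_j|^β dμ^N` (as a Bochner integral, whether or not it
converges absolutely). -/
def ZN (μ : Measure ℚ_[p]) [SigmaFinite μ] (X : Set ℚ_[p]) (N : ℕ) (β : ℂ) : ℂ :=
  ∫ x : Fin N → ℚ_[p], ∏ q ∈ pairs N, (‖x q.1 - x q.2‖ : ℂ) ^ β
    ∂(Measure.pi fun _ => μ.restrict X)

/-- The multivariate canonical partition function
`𝒵_I(X, s) = ∫_{X^I} ∏_{i<j, i,j ∈ I} |x_i - x_j|^{s_{ij}} dμ^I` for a subset `I ⊆ [N]`. -/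
def ZI (μ : Measure ℚ_[p]) [SigmaFinite μ] (X : Set ℚ_[p]) {N : ℕ} (I : Finset (Fin N))
    (s : Fin N → Fin N → ℂ) : ℂ :=
  ∫ x : I → ℚ_[p],
    ∏ q ∈ Finset.univ.filter (fun q : (↥I) × (↥I) => (q.1 : Fin N) < (q.2 : Fin N)),
      (‖x q.1 - x q.2‖ : ℂ) ^ s q.1.1 q.2.1
    ∂(Measure.pi fun _ => μ.restrict X)

/-- The multivariate canonical partition function
`𝒵_N(ℙ¹(ℚ_p), s) = ∫_{(ℙ¹(ℚ_p))^N} ∏_{i<j} δ(ξ_i,ξ_j)^{s_{ij}} dν^N`. -/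
def ZP1s (ν : Measure (P1 p)) [SigmaFinite ν] (N : ℕ) (s : Fin N → Fin N → ℂ) : ℂ :=
  ∫ x : Fin N → P1 p, ∏ q ∈ pairs N, ((pdelta p (x q.1) (x q.2) : ℝ) : ℂ) ^ s q.1 q.2
    ∂(Measure.pi fun _ => ν)

/-- The one-component canonical partition function `Z_N(ℙ¹(ℚ_p), β)`. -/
def ZP1 (ν : Measure (P1 p)) [SigmaFinite ν] (N : ℕ) (β : ℂ) : ℂ :=
  ∫ x : Fin N → P1 p, ∏ q ∈ pairs N, ((pdelta p (x q.1) (x q.2) : ℝ) : ℂ) ^ β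
    ∂(Measure.pi fun _ => ν)

/-! ### The quadratic recurrence -/

/-- The factor `ρ_{N,k}(t,β)` appearing in the quadratic recurrence; here
`N.choose 2 = N(N-1)/2`. -/
def rho (N k : ℕ) (t : ℝ) (β : ℂ) : ℂ :=
  if t = 0 then
    (((N : ℂ) + (N.choose 2 : ℂ) * β) * (1 - 2 * (k : ℂ) / (N : ℂ)) + 1) /
      (((N : ℂ) + (N.choose 2 : ℂ) * β) - 1)
  else
    Complex.sinh (((t : ℂ) / 2) * (((N : ℂ) + (N.choose 2 : ℂ) * β) * (1 - 2 * (k : ℂ) / (N : ℂ)) + 1)) /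
      Complex.sinh (((t : ℂ) / 2) * (((N : ℂ) + (N.choose 2 : ℂ) * β) - 1))

/-- The quadratic recurrence: `F 0 = F 1 = 1` and
`F N t β = ∑_{k=1}^{N-1} (k/N) ρ_{N,k}(t,β) F_{N-k}(t,β) F_k(t,β)` for `N ≥ 2`. -/
def F : ℕ → ℝ → ℂ → ℂ
  | 0, _, _ => 1
  | 1, _, _ => 1
  | N + 2, t, β =>
    ∑ k ∈ (Finset.Icc 1 (N + 1)).attach,
      (((k : ℕ) : ℂ) / ((N : ℂ) + 2)) * rho (N + 2) k t β *
        F (N + 2 - (k : ℕ)) t β * F (k : ℕ) t β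
  decreasing_by
  all_goals
    have hk := Finset.mem_Icc.mp k.2
    omega

/-! ### Splitting chains -/

/-- A splitting chain `Λ_0 > Λ_1 > ⋯ > Λ_L` of set partitions of the subset `I ⊆ [N]`,
beginning with the trivial partition `{I}` and ending with the partition of `I` into
singletons.  (The values `Λ ℓ` for `ℓ > L` are required to be `∅`, so that a chain is
determined by the genuine data `Λ_0, …, Λ_L`.) -/
structure SplChain (N : ℕ) (I : Finset (Fin N)) where
  L : ℕ
  Λ : ℕ → Finset (Finset (Fin N))
  nonempty_mem : ∀ ℓ ≤ L, ∀ B ∈ Λ ℓ, B.Nonempty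
  subset_mem : ∀ ℓ ≤ L, ∀ B ∈ Λ ℓ, B ⊆ I
  cover : ∀ ℓ ≤ L, ∀ i ∈ I, ∃! B, B ∈ Λ ℓ ∧ i ∈ B
  first : Λ 0 = {I}
  last : Λ L = I.image fun i => {i}
  refines : ∀ ℓ < L, ∀ B ∈ Λ (ℓ + 1), ∃ C ∈ Λ ℓ, B ⊆ C
  strict : ∀ ℓ < L, Λ (ℓ + 1) ≠ Λ ℓ
  trailing : ∀ ℓ, L < ℓ → Λ ℓ = ∅

variable {N : ℕ} {I : Finset (Fin N)}

/-- The branches of a splitting chain: the non-singleton parts,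
`ℬ(𝔖) = (Λ_0 ∪ ⋯ ∪ Λ_{L-1}) \ Λ_L`. -/
def SplChain.branches (S : SplChain N I) : Finset (Finset (Fin N)) :=
  ((Finset.range S.L).biUnion S.Λ) \ S.Λ S.L

/-- The depth `ℓ_𝔖(λ) = max {ℓ : λ ∈ Λ_ℓ}` of a branch. -/
def SplChain.depth (S : SplChain N I) (lam : Finset (Fin N)) : ℕ :=
  ((Finset.range (S.L + 1)).filter fun ℓ => lam ∈ S.Λ ℓ).sup id

/-- The degree `deg_𝔖(λ) = #{λ' ∈ Λ_{ℓ_𝔖(λ)+1} : λ' ⊆ λ}` of a branch. -/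
def SplChain.degree (S : SplChain N I) (lam : Finset (Fin N)) : ℕ :=
  ((S.Λ (S.depth lam + 1)).filter fun lam' => lam' ⊆ lam).card

/-- A splitting chain is reduced if every branch appears in exactly one partition of the
chain (namely the one at its depth). -/
def SplChain.Reduced (S : SplChain N I) : Prop :=
  ∀ lam ∈ S.branches, ∀ ℓ ≤ S.L, (lam ∈ S.Λ ℓ ↔ ℓ = S.depth lam)

/-- `e_λ(s) = #λ - 1 + ∑_{i<j, i,j ∈ λ} s_{ij}`. -/
def eexp (lam : Finset (Fin N)) (s : Fin N → Fin N → ℂ) : ℂ :=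
  (lam.card : ℂ) - 1 + ∑ q ∈ (pairs N).filter fun q => q.1 ∈ lam ∧ q.2 ∈ lam, s q.1 q.2

/-- Membership in `Ω_I`: `Re e_λ(s) > 0` for every `λ ⊆ I` with `#λ > 1`. -/
def InOmega (I : Finset (Fin N)) (s : Fin N → Fin N → ℂ) : Prop :=
  ∀ lam ⊆ I, 1 < lam.card → 0 < (eexp lam s).re


/-- The multivariate canonical partition function `𝒵_N(ℤ_p, s)` over `Fin N`-indexed tuples. -/
def ZNs (μ : Measure ℚ_[p]) [SigmaFinite μ] (X : Set ℚ_[p]) (N : ℕ)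
    (s : Fin N → Fin N → ℂ) : ℂ :=
  ∫ x : Fin N → ℚ_[p], ∏ q ∈ pairs N, (‖x q.1 - x q.2‖ : ℂ) ^ s q.1 q.2
    ∂(Measure.pi fun _ => μ.restrict X)

/-- The ball `p^v ℤ_p = {x : |x| ≤ p^{-v}}` in `ℚ_p`. -/
def pvball (v : ℤ) : Set ℚ_[p] := {x | ‖x‖ ≤ (p : ℝ) ^ (-v)}

/-- `G_N(q,β) = N! q^{(1/2)(N choose 2)β} F_N(log q, β)`. -/
def GN (N : ℕ) (β : ℂ) (q : ℝ) : ℂ :=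
  (N.factorial : ℂ) * (q : ℂ) ^ ((N.choose 2 : ℂ) * β / 2) * F N (Real.log q) β

/-- `H_N(q,β)`, the efficient formula for `Z_N(ℙ¹(K),β)` as a function of `q`. -/
def HN (N : ℕ) (β : ℂ) (q : ℝ) : ℂ :=
  (N.factorial : ℂ) * ∑ k ∈ Finset.range (N + 1),
    Complex.cosh (((Real.log q : ℂ) / 2) * ((N : ℂ) + (N.choose 2 : ℂ) * β) *
          (1 - 2 * (k : ℂ) / (N : ℂ))) /
        (2 * Complex.cosh ((Real.log q : ℂ) / 2)) ^ N *
      F (N - k) (Real.log q) β * F k (Real.log q) β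

end

/-! ### Abstract two-piece decomposition -/

section Abstract

open Finset

open Classical in
noncomputable def fw {X ι : Type} [Fintype ι] (w : X → X → ℂ) (x : ι → X) : ℂ :=
  ∏ i, ∏ j, if i = j then 1 else w (x i) (x j)

lemma fw_measurable {X ι : Type} [Fintype ι] [MeasurableSpace X] {w : X → X → ℂ}
    (hw : Measurable (Function.uncurry w)) : Measurable (fw (ι := ι) w) := by
  unfold fw
  refine Finset.measurable_fun_prod _ fun i _ => Finset.measurable_fun_prod _ fun j _ => ?_
  split_ifs
  · exact measurable_const
  · exact hw.comp (g := Function.uncurry w) (f := fun x : ι → X => (x i, x j))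
      ((measurable_pi_apply i).prodMk (measurable_pi_apply j))

lemma fw_reindex {X ι κ : Type} [Fintype ι] [Fintype κ] (w : X → X → ℂ) (e : ι ≃ κ) (x : κ → X) :
    fw w (fun i => x (e i)) = fw w x := by
  classical
  unfold fw
  rw [← Equiv.prod_comp e (fun i => ∏ j, if i = j then 1 else w (x i) (x j))]
  refine Finset.prod_congr rfl fun i _ => ?_
  rw [← Equiv.prod_comp e]
  refine Finset.prod_congr rfl fun j _ => ?_
  simp [e.injective.eq_iff]

open Classical in
lemma fw_split {X ι : Type} [Fintype ι] (w : X → X → ℂ) (A : Set X)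
    (hAB : ∀ x ∈ A, ∀ y ∉ A, w x y = 1 ∧ w y x = 1) (S : ι → Prop) (x : ι → X)
    (h1 : ∀ i, S i → x i ∈ A) (h2 : ∀ i, ¬ S i → x i ∉ A) [Fintype {i // S i}] [Fintype {i // ¬ S i}] :
    fw w x = fw w (fun i : {i // S i} => x i) * fw w (fun i : {i // ¬ S i} => x i) := by
  unfold fw
  have key : ∀ f : ι → ℂ, (∏ i : {i // S i}, f i) * (∏ i : {i // ¬ S i}, f i) = ∏ i, f i := by
    intro f
    rw [← Fintype.prod_subtype_mul_prod_subtype S]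
    congr 1 <;> congr!
  rw [← key]
  congr 1
  · refine Finset.prod_congr rfl fun i _ => ?_
    rw [← key]
    have : (∏ j : {j // ¬ S j}, if (i : ι) = (j : ι) then 1 else w (x i) (x j)) = 1 := by
      refine Finset.prod_eq_one fun j _ => ?_
      split_ifs
      · rfl
      · exact (hAB _ (h1 i i.2) _ (h2 j j.2)).1
    rw [this, mul_one]
    refine Finset.prod_congr rfl fun j _ => ?_
    simp [Subtype.ext_iff]
  · refine Finset.prod_congr rfl fun i _ => ?_
    rw [← key]
    have : (∏ j : {j // S j}, if (i : ι) = (j : ι) then 1 else w (x i) (x j)) = 1 := by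
      refine Finset.prod_eq_one fun j _ => ?_
      split_ifs
      · rfl
      · exact (hAB _ (h1 j j.2) _ (h2 i i.2)).2
    rw [this, one_mul]
    refine Finset.prod_congr rfl fun j _ => ?_
    simp [Subtype.ext_iff]

lemma fw_scale {X : Type} {n : ℕ} (w w' : X → X → ℂ) (κ : ℂ) (h : ∀ x y, w' x y = κ * w x y)
    (x : Fin n → X) : fw w' x = (κ ^ (n - 1)) ^ n * fw w x := by
  have hfw : ∀ w : X → X → ℂ, fw w x = ∏ i, ∏ j, if i = j then 1 else w (x i) (x j) := by
    intro w; unfold fw; congr!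
  rw [hfw, hfw]
  have : ∀ i : Fin n, (∏ j, if i = j then 1 else w' (x i) (x j)) =
      κ ^ (n - 1) * ∏ j, if i = j then 1 else w (x i) (x j) := by
    intro i
    have h3 : κ ^ (n - 1) = ∏ j : Fin n, if i = j then 1 else κ := by
      rw [Finset.prod_ite]
      simp [Finset.filter_not, Finset.card_sdiff, Finset.filter_eq]
    rw [h3, ← Finset.prod_mul_distrib]
    refine Finset.prod_congr rfl fun j _ => ?_
    split_ifs <;> simp [h]
  rw [Finset.prod_congr rfl fun i _ => this i, Finset.prod_mul_distrib]
  simp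

lemma fw_comp {X Y ι : Type} [Fintype ι] (w : Y → Y → ℂ) (f : X → Y) (x : ι → X) :
    fw w (fun i => f (x i)) = fw (fun a b => w (f a) (f b)) x := rfl

/-- integrability -/
def Int {X : Type} [MeasurableSpace X] (w : X → X → ℂ) (μ : Measure X) (n : ℕ) : Prop :=
  Integrable (fw (ι := Fin n) w) (Measure.pi fun _ => μ)

/-- integral -/
noncomputable def GG {X : Type} [MeasurableSpace X] (w : X → X → ℂ) (μ : Measure X) (n : ℕ) : ℂ :=
  ∫ x : Fin n → X, fw w x ∂(Measure.pi fun _ => μ)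

section
variable {X : Type} [MeasurableSpace X]

lemma card_int (w : X → X → ℂ) (μ : Measure X) [IsFiniteMeasure μ] {ι : Type} [Fintype ι]
    {n : ℕ} (hn : Fintype.card ι = n) :
    (Int w μ n → Integrable (fw (ι := ι) w) (Measure.pi fun _ => μ)) ∧
    ∫ x : ι → X, fw w x ∂(Measure.pi fun _ => μ) = GG w μ n := by
  let e : ι ≃ Fin n := Fintype.equivFinOfCardEq hn
  have hmp := measurePreserving_piCongrLeft (fun _ : Fin n => μ) e
  have hf : ∀ x : ι → X, fw w (MeasurableEquiv.piCongrLeft (fun _ : Fin n => X) e x) = fw w x := by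
    intro x
    rw [← fw_reindex w e]
    congr 1
    funext i
    rw [MeasurableEquiv.coe_piCongrLeft, Equiv.piCongrLeft_apply_apply]
  constructor
  · intro h
    have := (hmp.integrable_comp_emb (MeasurableEquiv.measurableEmbedding _)).2 h
    refine this.congr (Filter.Eventually.of_forall fun x => hf x)
  · have := hmp.integral_comp' (g := fw w)
    unfold GG
    rw [← this]
    exact integral_congr_ae (Filter.Eventually.of_forall fun x => (hf x).symm)

lemma pi_add_measure {ι : Type} [Fintype ι] [DecidableEq ι] (μ₁ μ₂ : Measure X) [IsFiniteMeasure μ₁]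
    [IsFiniteMeasure μ₂] :
    (Measure.pi fun _ : ι => μ₁ + μ₂) =
      ∑ S ∈ (Finset.univ : Finset ι).powerset, Measure.pi fun i => if i ∈ S then μ₁ else μ₂ := by
  have hfin : ∀ (S : Finset ι) i, IsFiniteMeasure (if i ∈ S then μ₁ else μ₂) := by
    intro S i; split_ifs <;> infer_instance
  refine Measure.pi_eq fun s hs => ?_
  rw [Measure.finsetSum_apply]
  simp only [Measure.pi_pi, Measure.add_apply]
  rw [Finset.prod_add]
  refine Finset.sum_congr rfl fun S hS => ?_
  have : ∀ i, (if i ∈ S then μ₁ else μ₂) (s i) = if i ∈ S then μ₁ (s i) else μ₂ (s i) := by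
    intro i; split_ifs <;> rfl
  simp_rw [this]
  rw [Finset.prod_ite]
  congr 1
  · refine Finset.prod_congr ?_ fun _ _ => rfl
    ext; simp
  · refine Finset.prod_congr ?_ fun _ _ => rfl
    ext; simp

lemma mp_if {ι : Type} [Fintype ι] (P : ι → Prop) [DecidablePred P] (μ₁ μ₂ : Measure X)
    [IsFiniteMeasure μ₁] [IsFiniteMeasure μ₂] :
    MeasurePreserving (MeasurableEquiv.piEquivPiSubtypeProd (fun _ => X) P)
      (Measure.pi fun i => if P i then μ₁ else μ₂)
      ((Measure.pi fun _ : {i // P i} => μ₁).prod (Measure.pi fun _ : {i // ¬ P i} => μ₂)) := by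
  have hfin : ∀ i, IsFiniteMeasure (if P i then μ₁ else μ₂) := by
    intro i; split_ifs <;> infer_instance
  have hmp := measurePreserving_piEquivPiSubtypeProd (fun i => if P i then μ₁ else μ₂) P
  have e1 : (fun i : {i // P i} => if P i then μ₁ else μ₂) = fun _ => μ₁ := by
    funext i; simp [i.2]
  have e2 : (fun i : {i // ¬ P i} => if P i then μ₁ else μ₂) = fun _ => μ₂ := by
    funext i; simp [i.2]
  rw [e1, e2] at hmp
  exact hmp

lemma split_int' (w : X → X → ℂ) (μ₁ μ₂ : Measure X) [IsFiniteMeasure μ₁]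
    [IsFiniteMeasure μ₂] (A : Set X) (h1 : ∀ᵐ x ∂μ₁, x ∈ A) (h2 : ∀ᵐ x ∂μ₂, x ∉ A)
    (hAB : ∀ x ∈ A, ∀ y ∉ A, w x y = 1 ∧ w y x = 1) {ι : Type} [Fintype ι] (P : ι → Prop)
    [DecidablePred P] {k l : ℕ} (c1 : Fintype.card {i // P i} = k)
    (c2 : Fintype.card {i // ¬ P i} = l) :
    (Int w μ₁ k → Int w μ₂ l →
      Integrable (fw w) (Measure.pi fun i => if P i then μ₁ else μ₂)) ∧
    ∫ x, fw w x ∂(Measure.pi fun i => if P i then μ₁ else μ₂) =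
      GG w μ₁ k * GG w μ₂ l := by
  have hfin : ∀ i, IsFiniteMeasure (if P i then μ₁ else μ₂) := by
    intro i; split_ifs <;> infer_instance
  have hmp := mp_if P μ₁ μ₂
  have hae : ∀ᵐ x ∂(Measure.pi fun i => if P i then μ₁ else μ₂),
      fw w x = (fun z : ({i // P i} → X) × ({i // ¬ P i} → X) => fw w z.1 * fw w z.2)
        (MeasurableEquiv.piEquivPiSubtypeProd (fun _ => X) P x) := by
    have hh : ∀ᵐ x ∂(Measure.pi fun i => if P i then μ₁ else μ₂), ∀ i,
        ((P i → x i ∈ A) ∧ (¬ P i → x i ∉ A)) := by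
      refine Filter.eventually_all.2 fun i => ?_
      refine (Measure.tendsto_eval_ae_ae (μ := fun i => if P i then μ₁ else μ₂) (i := i)).eventually
        (p := fun y => (P i → y ∈ A) ∧ (¬ P i → y ∉ A)) ?_
      by_cases hi : P i
      · simp only [hi, if_true]
        filter_upwards [h1] with y hy
        simpa using hy
      · simp only [hi, if_false]
        filter_upwards [h2] with y hy
        simpa using hy
    filter_upwards [hh] with x hx
    exact fw_split w A hAB P x (fun i => (hx i).1) (fun i => (hx i).2)
  constructor
  · intro i1 i2
    refine Integrable.congr ?_ (hae.mono fun x hx => hx.symm)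
    exact (hmp.integrable_comp_emb (MeasurableEquiv.measurableEmbedding _)
      (g := fun z : ({i // P i} → X) × ({i // ¬ P i} → X) => fw w z.1 * fw w z.2)).2
      (Integrable.mul_prod ((card_int w μ₁ c1).1 i1) ((card_int w μ₂ c2).1 i2))
  · rw [integral_congr_ae hae, hmp.integral_comp' (g := fun z : ({i // P i} → X) × ({i // ¬ P i} → X) => fw w z.1 * fw w z.2),
      integral_prod_mul, (card_int w μ₁ c1).2, (card_int w μ₂ c2).2]

lemma split_int (w : X → X → ℂ) (μ₁ μ₂ : Measure X) [IsFiniteMeasure μ₁]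
    [IsFiniteMeasure μ₂] (A : Set X) (h1 : ∀ᵐ x ∂μ₁, x ∈ A) (h2 : ∀ᵐ x ∂μ₂, x ∉ A)
    (hAB : ∀ x ∈ A, ∀ y ∉ A, w x y = 1 ∧ w y x = 1) {n : ℕ} (S : Finset (Fin n)) :
    (Int w μ₁ S.card → Int w μ₂ (n - S.card) →
      Integrable (fw w) (Measure.pi fun i => if i ∈ S then μ₁ else μ₂)) ∧
    ∫ x, fw w x ∂(Measure.pi fun i => if i ∈ S then μ₁ else μ₂) =
      GG w μ₁ S.card * GG w μ₂ (n - S.card) :=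
  split_int' w μ₁ μ₂ A h1 h2 hAB (fun i => i ∈ S) (by simp) (by
    rw [Fintype.card_subtype_compl]; simp)

lemma two_piece (w : X → X → ℂ) (μ₁ μ₂ : Measure X) [IsFiniteMeasure μ₁]
    [IsFiniteMeasure μ₂] (A : Set X) (h1 : ∀ᵐ x ∂μ₁, x ∈ A) (h2 : ∀ᵐ x ∂μ₂, x ∉ A)
    (hAB : ∀ x ∈ A, ∀ y ∉ A, w x y = 1 ∧ w y x = 1) {n : ℕ} 
    (i1 : ∀ k ≤ n, Int w μ₁ k) (i2 : ∀ k ≤ n, Int w μ₂ k) :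
    Int w (μ₁ + μ₂) n ∧ GG w (μ₁ + μ₂) n / n.factorial =
      ∑ k ∈ range (n + 1), (GG w μ₁ k / k.factorial) * (GG w μ₂ (n - k) / (n - k).factorial) := by
  have hS := fun S : Finset (Fin n) => split_int w μ₁ μ₂ A h1 h2 hAB S
  have hI : ∀ S : Finset (Fin n), Integrable (fw w) (Measure.pi fun i => if i ∈ S then μ₁ else μ₂) :=
    fun S => (hS S).1 (i1 _ (by simpa using S.card_le_univ)) (i2 _ (by simp))
  unfold Int 
  constructor
  · rw [pi_add_measure, integrable_finsetSum_measure]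
    exact fun S _ => hI S
  · unfold GG at *
    rw [pi_add_measure, integral_finsetSum_measure (fun S _ => hI S)]
    simp_rw [fun S => (hS S).2]
    rw [Finset.sum_powerset_apply_card (fun k => (∫ x : Fin k → X, fw w x ∂(Measure.pi fun _ => μ₁)) *
      (∫ x : Fin (n - k) → X, fw w x ∂(Measure.pi fun _ => μ₂)))]
    simp only [Finset.card_univ, Fintype.card_fin, nsmul_eq_mul]
    rw [Finset.sum_div]
    refine Finset.sum_congr rfl fun k hk => ?_
    have hk' : k ≤ n := by simpa [Nat.lt_succ_iff] using hk
    have := Nat.choose_mul_factorial_mul_factorial hk'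
    have h3 : (n.factorial : ℂ) = n.choose k * k.factorial * (n - k).factorial := by
      exact_mod_cast this.symm
    have f1 : (k.factorial : ℂ) ≠ 0 := by exact_mod_cast k.factorial_ne_zero
    have f2 : ((n - k).factorial : ℂ) ≠ 0 := by exact_mod_cast (n - k).factorial_ne_zero
    have f3 : (n.choose k : ℂ) ≠ 0 := by exact_mod_cast (Nat.choose_pos hk').ne'
    rw [h3]
    field_simp

lemma pi_smul_measure {ι : Type} [Fintype ι] (c : NNReal) (μ : Measure X) [IsFiniteMeasure μ] :
    (Measure.pi fun _ : ι => c • μ) = (c ^ Fintype.card ι) • (Measure.pi fun _ : ι => μ) := by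
  refine Measure.pi_eq fun s hs => ?_
  simp only [Measure.smul_apply, Measure.pi_pi]
  simp only [ENNReal.smul_def, smul_eq_mul]
  rw [Finset.prod_mul_distrib]
  simp

lemma GG_smul (w : X → X → ℂ) (c : NNReal) (μ : Measure X) [IsFiniteMeasure μ] (n : ℕ) :
    (Int w μ n → Int w (c • μ) n) ∧ GG w (c • μ) n = (c : ℂ) ^ n * GG w μ n := by
  unfold Int GG
  rw [pi_smul_measure]
  constructor
  · intro h
    exact h.smul_measure_nnreal
  · rw [integral_smul_nnreal_measure]
    simp [NNReal.smul_def]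

lemma GG_map {Y : Type} [MeasurableSpace Y] (w : Y → Y → ℂ) (hw : Measurable (Function.uncurry w))
    (f : X → Y) (hf : Measurable f) (w' : X → X → ℂ)
    (κ : ℂ) (μ : Measure X) [IsFiniteMeasure μ] (A : Set X) (hA : ∀ᵐ x ∂μ, x ∈ A)
    (h : ∀ x ∈ A, ∀ y ∈ A, w (f x) (f y) = κ * w' x y)
    (n : ℕ) : (κ ≠ 0 → (Int w (μ.map f) n ↔ Int w' μ n)) ∧
     GG w (μ.map f) n = (κ ^ (n - 1)) ^ n * GG w' μ n := by
  have hfin : IsFiniteMeasure (μ.map f) := inferInstance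
  have hmap := Measure.pi_map_pi (ι := Fin n) (μ := fun _ => μ) (f := fun _ => f) (fun _ => hf.aemeasurable)
  have hm : Measurable (fun (x : Fin n → X) i => f (x i)) :=
    measurable_pi_lambda _ fun i => hf.comp (measurable_pi_apply i)
  have hae : ∀ᵐ x ∂(Measure.pi fun _ : Fin n => μ), fw w (fun i => f (x i)) = (κ ^ (n - 1)) ^ n * fw w' x := by
    have hh : ∀ᵐ x ∂(Measure.pi fun _ : Fin n => μ), ∀ i, x i ∈ A := 
      Filter.eventually_all.2 fun i => 
        (Measure.tendsto_eval_ae_ae (μ := fun _ : Fin n => μ) (i := i)).eventually hA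
    filter_upwards [hh] with x hx
    have h4 := fw_scale (n := n) (fun a b : A => w' a b) (fun a b : A => w (f a) (f b)) κ
      (fun a b => h a a.2 b b.2) (fun i => ⟨x i, hx i⟩)
    exact h4
  unfold Int GG
  rw [← hmap]
  constructor
  · intro hκ
    rw [integrable_map_measure (fw_measurable hw).aestronglyMeasurable hm.aemeasurable,
      integrable_congr (f := fw w ∘ _) (g := fun x => (κ ^ (n - 1)) ^ n * fw w' x) hae]
    rw [integrable_const_mul_iff]
    exact (pow_ne_zero _ (pow_ne_zero _ hκ)).isUnit
  · rw [integral_map hm.aemeasurable (fw_measurable hw).aestronglyMeasurable, integral_congr_ae hae,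
      integral_const_mul]

end

end Abstract

/-! ### The `p`-adic integers -/

section Zp

open Finset

variable (p : ℕ) [Fact p.Prime]

noncomputable instance : MeasurableSpace ℤ_[p] := borel _
instance : BorelSpace ℤ_[p] := ⟨rfl⟩

noncomputable def mu : Measure ℤ_[p] := Measure.addHaarMeasure ⊤

instance : (mu p).IsAddHaarMeasure := by unfold mu; infer_instance

instance : IsProbabilityMeasure (mu p) := ⟨by
  have := Measure.addHaarMeasure_self (G := ℤ_[p]) (K₀ := ⊤)
  simpa [mu] using this⟩

lemma haar_unique (ρ : Measure ℤ_[p]) [IsFiniteMeasure ρ] (h : ∀ t, ρ.map (fun x => t + x) = ρ) :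
    ∃ c : NNReal, ρ = c • mu p ∧ ρ Set.univ = c := by
  have : ρ.IsAddLeftInvariant := ⟨h⟩
  have h2 := Measure.isAddLeftInvariant_eq_smul ρ (mu p)
  refine ⟨_, h2, ?_⟩
  conv_lhs => rw [h2]
  rw [Measure.smul_apply]
  simp [ENNReal.smul_def]

noncomputable def Sm (a : ZMod p) (x : ℤ_[p]) : ℤ_[p] := (a.val : ℤ_[p]) + p * x

lemma Sm_meas (a : ZMod p) : Measurable (Sm p a) := by
  unfold Sm
  have : Continuous fun x : ℤ_[p] => (a.val : ℤ_[p]) + p * x := by fun_prop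
  exact this.measurable

lemma toZMod_Sm (a : ZMod p) (x : ℤ_[p]) : PadicInt.toZMod (Sm p a x) = a := by
  unfold Sm
  simp

lemma norm_sub_lt (x y : ℤ_[p]) : ‖x - y‖ < 1 ↔ PadicInt.toZMod x = PadicInt.toZMod y := by
  rw [← PadicInt.mem_nonunits, ← IsLocalRing.mem_maximalIdeal, ← PadicInt.ker_toZMod, RingHom.mem_ker,
    map_sub, sub_eq_zero]

lemma norm_sub_eq (x y : ℤ_[p]) (h : PadicInt.toZMod x ≠ PadicInt.toZMod y) : ‖x - y‖ = 1 := by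
  refine le_antisymm (PadicInt.norm_le_one _) ?_
  by_contra hh
  exact h ((norm_sub_lt p x y).1 (not_le.1 hh))

noncomputable def pinv : NNReal := (p : NNReal)⁻¹

noncomputable def mua (a : ZMod p) : Measure ℤ_[p] := pinv p • (mu p).map (Sm p a)

instance (a : ZMod p) : IsFiniteMeasure (mua p a) := by unfold mua; infer_instance

lemma Sm_carry (a : ZMod p) (t : ℤ_[p]) :
    ∃ d, ∀ x, t + Sm p a x = Sm p (PadicInt.toZMod t + a) (d + x) := by
  have h : PadicInt.toZMod (t + (a.val : ℤ_[p])) =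
      PadicInt.toZMod (((PadicInt.toZMod t + a).val : ℕ) : ℤ_[p]) := by simp
  rw [← norm_sub_lt, PadicInt.norm_lt_one_iff_dvd] at h
  obtain ⟨d, hd⟩ := h
  refine ⟨d, fun x => ?_⟩
  unfold Sm
  linear_combination hd

lemma pinv_mul : pinv p * p = 1 := by
  unfold pinv
  refine inv_mul_cancel₀ ?_
  exact_mod_cast (Fact.out : p.Prime).ne_zero

lemma mu_decomp : mu p = ∑ a, mua p a := by
  have hinv : ∀ t : ℤ_[p], (∑ a, mua p a).map (fun x => t + x) = ∑ a, mua p a := by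
    intro t
    have hm : Measurable fun x : ℤ_[p] => t + x := (continuous_const.add continuous_id).measurable
    rw [← Measure.mapₗ_apply_of_measurable hm, map_sum]
    rw [← Equiv.sum_comp (Equiv.addLeft (PadicInt.toZMod t)) (mua p)]
    refine Finset.sum_congr rfl fun a _ => ?_
    rw [Measure.mapₗ_apply_of_measurable hm]
    unfold mua
    rw [Measure.map_smul, Measure.map_map hm (Sm_meas p a)]
    congr 1
    obtain ⟨d, hd⟩ := Sm_carry p a t
    have h1 : ((fun x => t + x) ∘ Sm p a) = Sm p (PadicInt.toZMod t + a) ∘ (fun x => d + x) := by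
      funext x; exact hd x
    have hm2 : Measurable fun x : ℤ_[p] => d + x := (continuous_const.add continuous_id).measurable
    rw [h1, ← Measure.map_map (Sm_meas p _) hm2, map_add_left_eq_self]
    rfl
  obtain ⟨c, hc, hc'⟩ := haar_unique p (∑ a, mua p a) hinv
  have h1 : (∑ a, mua p a) Set.univ = 1 := by
    rw [Measure.finsetSum_apply]
    have : ∀ a, mua p a Set.univ = pinv p := by
      intro a
      unfold mua
      rw [Measure.smul_apply, Measure.map_apply (Sm_meas p a) MeasurableSet.univ]
      simp [ENNReal.smul_def]
    simp only [this, Finset.sum_const, Finset.card_univ, ZMod.card]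
    have := pinv_mul p
    rw [nsmul_eq_mul, mul_comm]
    exact_mod_cast this
  rw [h1] at hc'
  have : c = 1 := by exact_mod_cast hc'.symm
  rw [hc, this, one_smul]

variable (β : ℂ)

noncomputable def wt (x y : ℤ_[p]) : ℂ := ((‖x - y‖ : ℝ) : ℂ) ^ (β / 2)

noncomputable def kap : ℂ := (((p : ℝ)⁻¹ : ℝ) : ℂ) ^ (β / 2)

lemma kap_ne : kap p β ≠ 0 := by
  unfold kap
  have : (p : ℂ) ≠ 0 := by exact_mod_cast (Fact.out : p.Prime).ne_zero
  simp [Complex.cpow_eq_zero_iff, this]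

lemma wt_meas : Measurable (Function.uncurry (wt p β)) := by
  have : Measurable fun z : ℤ_[p] × ℤ_[p] => ‖z.1 - z.2‖ :=
    (continuous_fst.sub continuous_snd).norm.measurable
  exact (Complex.measurable_ofReal.comp this).pow_const _

lemma wt_one (x y : ℤ_[p]) (h : PadicInt.toZMod x ≠ PadicInt.toZMod y) : wt p β x y = 1 := by
  unfold wt; rw [norm_sub_eq p x y h]; simp

lemma wt_p (x y : ℤ_[p]) : (((p : ℝ)⁻¹ * ‖x - y‖ : ℝ) : ℂ) ^ (β / 2) = kap p β * wt p β x y := by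
  unfold kap wt
  rw [Complex.ofReal_mul, Complex.mul_cpow_ofReal_nonneg (by positivity) (norm_nonneg _)]

lemma wt_Sm (a : ZMod p) (x y : ℤ_[p]) : wt p β (Sm p a x) (Sm p a y) = kap p β * wt p β x y := by
  rw [← wt_p]
  unfold wt Sm
  congr 2
  rw [add_sub_add_left_eq_sub, ← mul_sub, norm_mul, PadicInt.norm_p]

lemma mua_GG (a : ZMod p) (n : ℕ) : (Int (wt p β) (mu p) n → Int (wt p β) (mua p a) n) ∧
    GG (wt p β) (mua p a) n = (pinv p : ℂ) ^ n * ((kap p β ^ (n - 1)) ^ n * GG (wt p β) (mu p) n) := by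
  have h1 := GG_map (wt p β) (wt_meas p β) (Sm p a) (Sm_meas p a) (wt p β) (kap p β) (mu p)
    Set.univ (by simp) (fun x _ y _ => wt_Sm p β a x y) n
  have h2 := GG_smul (wt p β) (pinv p) ((mu p).map (Sm p a)) n
  refine ⟨fun h => h2.1 ((h1.1 (kap_ne p β)).2 h), ?_⟩
  unfold mua
  rw [h2.2, h1.2]

noncomputable def muT (T : Finset (ZMod p)) : Measure ℤ_[p] := ∑ a ∈ T, mua p a

instance (T : Finset (ZMod p)) : IsFiniteMeasure (muT p T) := by unfold muT; infer_instance

lemma muT_insert (a : ZMod p) (T : Finset (ZMod p)) (h : a ∉ T) :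
    muT p (insert a T) = mua p a + muT p T := by
  unfold muT; rw [Finset.sum_insert h]

lemma mua_ae (a : ZMod p) : ∀ᵐ x ∂(mua p a), PadicInt.toZMod x = a := by
  unfold mua
  refine Measure.ae_smul_measure (c := pinv p) ?_ 
  refine (ae_map_iff (Sm_meas p a).aemeasurable ?_).2 (Filter.Eventually.of_forall fun x => toZMod_Sm p a x)
  have : {x : ℤ_[p] | PadicInt.toZMod x = a} = {x | ‖x - (a.val : ℤ_[p])‖ < 1} := by
    ext x; simp [norm_sub_lt]
  rw [this]
  exact (isOpen_lt (by fun_prop) continuous_const).measurableSet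

lemma muT_ae (T : Finset (ZMod p)) : ∀ᵐ x ∂(muT p T), PadicInt.toZMod x ∈ T := by
  classical
  induction T using Finset.induction_on with
  | empty => simp [muT]
  | insert a T h ih =>
    rw [muT_insert p a T h, ae_add_measure_iff]
    constructor
    · filter_upwards [mua_ae p a] with x hx
      simp [hx]
    · filter_upwards [ih] with x hx
      simp [hx]

noncomputable def fser : PowerSeries ℂ := PowerSeries.mk fun n =>
  (pinv p : ℂ) ^ n * ((kap p β ^ (n - 1)) ^ n * GG (wt p β) (mu p) n) / n.factorial

lemma cond_AB (a : ZMod p) : ∀ x ∈ {x : ℤ_[p] | PadicInt.toZMod x = a},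
    ∀ y ∉ {x : ℤ_[p] | PadicInt.toZMod x = a}, wt p β x y = 1 ∧ wt p β y x = 1 := by
  intro x hx y hy
  simp only [Set.mem_ofPred_eq] at hx hy
  exact ⟨wt_one p β x y (by rw [hx]; exact Ne.symm hy), wt_one p β y x (by rw [hx]; exact hy)⟩

lemma muT_not (a : ZMod p) (T : Finset (ZMod p)) (h : a ∉ T) :
    ∀ᵐ x ∂(muT p T), x ∉ {x : ℤ_[p] | PadicInt.toZMod x = a} := by
  filter_upwards [muT_ae p T] with x hx h2
  exact h (h2 ▸ hx)

lemma GG_zero {X : Type} [MeasurableSpace X] (w : X → X → ℂ) (μ : Measure X) : GG w μ 0 = 1 := by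
  unfold GG fw
  simp [measureReal_def, Measure.pi_univ]

lemma muT_GG (m : ℕ) (hm : ∀ k ≤ m, Int (wt p β) (mu p) k) (T : Finset (ZMod p)) :
    ∀ k ≤ m, Int (wt p β) (muT p T) k ∧ GG (wt p β) (muT p T) k / k.factorial =
      PowerSeries.coeff k (fser p β ^ T.card) := by
  classical
  induction T using Finset.induction_on with
  | empty =>
    intro k hk
    have h0 : muT p ∅ = (0 : NNReal) • mu p := by simp [muT]
    have := GG_smul (wt p β) 0 (mu p) k
    rw [h0]
    refine ⟨this.1 (hm k hk), ?_⟩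
    rw [this.2]
    rcases Nat.eq_zero_or_pos k with rfl | hk
    · simp [GG_zero]
    · simp [hk.ne', PowerSeries.coeff_one]
  | insert a T h ih =>
    intro k hk
    have := two_piece (wt p β) (mua p a) (muT p T) {x : ℤ_[p] | PadicInt.toZMod x = a}
      (mua_ae p a) (muT_not p a T h) (cond_AB p β a) (n := k)
      (fun l hl => (mua_GG p β a l).1 (hm l (hl.trans hk))) (fun l hl => (ih l (hl.trans hk)).1)
    rw [muT_insert p a T h]
    refine ⟨this.1, ?_⟩
    rw [this.2, Finset.card_insert_of_notMem h, pow_succ', PowerSeries.coeff_mul,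
      Finset.Nat.sum_antidiagonal_eq_sum_range_succ (fun i j => PowerSeries.coeff i (fser p β) *
        PowerSeries.coeff j (fser p β ^ T.card))]
    refine Finset.sum_congr rfl fun l hl => ?_
    rw [(ih (k - l) (by omega)).2, (mua_GG p β a l).2]
    simp [fser]

end Zp

section Conv

open Finset

variable (p : ℕ) [Fact p.Prime] (β : ℂ)

noncomputable def JJ (n : ℕ) (M : ENNReal) (ρ : Measure ℤ_[p]) : ENNReal :=
  ∫⁻ x : Fin n → ℤ_[p], min ‖fw (wt p β) x‖ₑ M ∂(Measure.pi fun _ => ρ)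

noncomputable def theta (n : ℕ) : ENNReal :=
  ((pinv p ^ n * max 1 (‖kap p β‖₊ ^ ((n - 1) * n)) : NNReal) : ENNReal)

lemma JJ_mua (n : ℕ) (M : ENNReal) (a : ZMod p) :
    JJ p β n M (mua p a) ≤ theta p β n * JJ p β n M (mu p) := by
  unfold JJ mua
  rw [pi_smul_measure]
  have hmap := Measure.pi_map_pi (ι := Fin n) (μ := fun _ => mu p) (f := fun _ => Sm p a)
    (fun _ => (Sm_meas p a).aemeasurable)
  have hm : Measurable (fun (x : Fin n → ℤ_[p]) i => Sm p a (x i)) :=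
    measurable_pi_lambda _ fun i => (Sm_meas p a).comp (measurable_pi_apply i)
  have hmeas : Measurable fun x : Fin n → ℤ_[p] => min ‖fw (wt p β) x‖ₑ M :=
    (fw_measurable (wt_meas p β)).enorm.min measurable_const
  rw [← hmap, lintegral_smul_measure, lintegral_map hmeas hm]
  have : ∀ x : Fin n → ℤ_[p], min ‖fw (wt p β) (fun i => Sm p a (x i))‖ₑ M ≤
      ((max 1 (‖kap p β‖₊ ^ ((n - 1) * n)) : NNReal) : ENNReal) * min ‖fw (wt p β) x‖ₑ M := by
    intro x
    have h4 := fw_scale (n := n) (wt p β) (fun a' b' => wt p β (Sm p a a') (Sm p a b')) (kap p β)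
      (fun x y => wt_Sm p β a x y) x
    rw [fw_comp, h4, enorm_mul, mul_min, ← pow_mul, enorm_pow]
    refine min_le_min ?_ ?_
    · gcongr
      rw [enorm_eq_nnnorm, ← ENNReal.coe_pow]
      exact_mod_cast le_max_right _ _
    · calc M = 1 * M := (one_mul _).symm
        _ ≤ _ := by
          gcongr
          exact_mod_cast le_max_left _ _
  calc _ ≤ (pinv p ^ Fintype.card (Fin n)) • ∫⁻ x : Fin n → ℤ_[p], 
        ((max 1 (‖kap p β‖₊ ^ ((n - 1) * n)) : NNReal) : ENNReal) * min ‖fw (wt p β) x‖ₑ M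
          ∂(Measure.pi fun _ => mu p) := by
        gcongr with x
        exact this x
    _ = _ := by
        rw [lintegral_const_mul _ hmeas, theta, ENNReal.smul_def, smul_eq_mul, ENNReal.coe_mul, mul_assoc]
        simp

lemma JJ_bound (n : ℕ) (hn : 1 ≤ n) (ih : ∀ k < n, Int (wt p β) (mu p) k) (T : Finset (ZMod p)) :
    ∃ C : ENNReal, C ≠ ⊤ ∧ ∀ M, JJ p β n M (muT p T) ≤ T.card * theta p β n * JJ p β n M (mu p) + C := by
  classical
  have hlow := fun T => muT_GG p β (n - 1) (fun k hk => ih k (by omega)) T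
  induction T using Finset.induction_on with
  | empty =>
    refine ⟨0, by simp, fun M => ?_⟩
    have h0 : muT p ∅ = (0 : NNReal) • mu p := by simp [muT]
    unfold JJ
    rw [h0, pi_smul_measure]
    simp [show n ≠ 0 by omega]
  | insert a T h ihT =>
    obtain ⟨C, hC, hC2⟩ := ihT
    let D : Finset (Fin n) → ENNReal := fun S => if S = univ ∨ S = ∅ then 0 else
      ∫⁻ x : Fin n → ℤ_[p], ‖fw (wt p β) x‖ₑ ∂(Measure.pi fun i => if i ∈ S then mua p a else muT p T)
    refine ⟨C + ∑ S ∈ (univ : Finset (Fin n)).powerset, D S, ?_, fun M => ?_⟩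
    · refine ENNReal.add_ne_top.2 ⟨hC, ?_⟩
      refine (ENNReal.sum_lt_top.2 fun S _ => ?_).ne
      simp only [D]
      split_ifs with hS
      · simp
      · push Not at hS
        have hc1 : S.card ≠ n := fun hh => hS.1 (Finset.eq_univ_of_card S (by simpa using hh))
        have hc0 : S.card ≠ 0 := fun hh => hS.2.ne_empty (Finset.card_eq_zero.1 hh)
        have hc : S.card ≤ n := by simpa using S.card_le_univ
        have := (split_int (wt p β) (mua p a) (muT p T) {x : ℤ_[p] | PadicInt.toZMod x = a}
          (mua_ae p a) (muT_not p a T h) (cond_AB p β a) S).1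
          ((mua_GG p β a _).1 (ih _ (by omega))) (hlow T _ (by omega)).1
        exact this.2
    · have key : ∀ S : Finset (Fin n), ∫⁻ x : Fin n → ℤ_[p], min ‖fw (wt p β) x‖ₑ M
          ∂(Measure.pi fun i => if i ∈ S then mua p a else muT p T) ≤
          (if S = univ then theta p β n * JJ p β n M (mu p) else 0) +
          (if S = ∅ then (T.card * theta p β n * JJ p β n M (mu p) + C) else 0) + D S := by
        intro S
        by_cases h1 : S = univ
        · subst h1
          have : (univ : Finset (Fin n)) ≠ ∅ := by
            have : Nonempty (Fin n) := ⟨⟨0, hn⟩⟩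
            exact Finset.univ_nonempty.ne_empty
          simp only [if_true, this, if_false, D, Finset.mem_univ, true_or, add_zero]
          exact JJ_mua p β n M a
        by_cases h2 : S = ∅
        · subst h2
          simp only [h1, if_true, if_false, D, Finset.notMem_empty, or_true, add_zero, zero_add]
          exact hC2 M
        · simp only [h1, h2, if_false, D, or_self, zero_add]
          exact lintegral_mono fun x => min_le_left _ _
      unfold JJ at *
      rw [muT_insert p a T h, pi_add_measure, lintegral_finsetSum_measure]
      refine (Finset.sum_le_sum fun S _ => key S).trans ?_
      rw [Finset.sum_add_distrib, Finset.sum_add_distrib]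
      simp only [Finset.powerset_univ, Finset.sum_ite_eq', Finset.mem_univ, if_true,
        Finset.card_insert_of_notMem h]
      push_cast
      refine le_of_eq ?_
      ring

lemma theta_lt (n : ℕ) (hn : 2 ≤ n) (hβ : -2 / (n : ℝ) < β.re) : (p : ENNReal) * theta p β n < 1 := by
  have hp := (Fact.out : p.Prime)
  have hp1 : (1 : ℝ) < p := by exact_mod_cast hp.one_lt
  have hp0 : (0 : ℝ) < p := by linarith
  have hn' : (2 : ℝ) ≤ n := by exact_mod_cast hn
  unfold theta
  have : (p : NNReal) * (pinv p ^ n * max 1 (‖kap p β‖₊ ^ ((n - 1) * n))) < 1 := by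
    rw [← NNReal.coe_lt_coe]
    push_cast
    have hk : ‖kap p β‖ = (p : ℝ) ^ (-(β.re / 2)) := by
      unfold kap
      rw [Complex.norm_cpow_eq_rpow_re_of_pos (by positivity), Real.inv_rpow hp0.le, Real.rpow_neg hp0.le]
      simp
    have hpi : ((pinv p : NNReal) : ℝ) ^ n = (p : ℝ) ^ (-(n : ℝ)) := by
      rw [Real.rpow_neg hp0.le, Real.rpow_natCast]
      simp [pinv]
    have hkk : ‖kap p β‖ ^ ((n - 1) * n) = (p : ℝ) ^ (-(β.re / 2) * ((n - 1) * n)) := by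
      rw [hk, ← Real.rpow_natCast, ← Real.rpow_mul hp0.le]
      congr 1
      push_cast [Nat.cast_sub (show 1 ≤ n by omega)]
      ring
    have hmax : max 1 (‖kap p β‖ ^ ((n - 1) * n)) < (p : ℝ) ^ ((n : ℝ) - 1) := by
      refine max_lt (Real.one_lt_rpow hp1 (by linarith)) ?_
      rw [hkk]
      refine Real.rpow_lt_rpow_of_exponent_lt hp1 ?_
      rw [div_lt_iff₀ (by linarith)] at hβ
      nlinarith
    rw [hpi]
    calc (p : ℝ) * ((p : ℝ) ^ (-(n : ℝ)) * max 1 (‖kap p β‖ ^ ((n - 1) * n)))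
        < (p : ℝ) * ((p : ℝ) ^ (-(n : ℝ)) * (p : ℝ) ^ ((n : ℝ) - 1)) := by
          gcongr
      _ = 1 := by
          rw [← Real.rpow_add hp0]
          ring_nf
          rw [Real.rpow_neg_one]
          field_simp
  exact_mod_cast this

lemma mu_eq_muT : muT p univ = mu p := by
  rw [mu_decomp p]; rfl

lemma conv (n : ℕ) (hβ : -2 / (n : ℝ) < β.re) : Int (wt p β) (mu p) n := by
  induction n using Nat.strong_induction_on with
  | _ n ih =>
  have ih' : ∀ k < n, Int (wt p β) (mu p) k := by
    intro k hk
    rcases Nat.lt_or_ge k 2 with h | h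
    · have : fw (ι := Fin k) (wt p β) = fun _ => 1 := by
        funext x
        have : Subsingleton (Fin k) := by
          interval_cases k <;> infer_instance
        unfold fw
        refine Finset.prod_eq_one fun i _ => Finset.prod_eq_one fun j _ => ?_
        rw [if_pos (Subsingleton.elim _ _)]
      unfold Int
      rw [this]
      exact integrable_const _
    · refine ih k hk (lt_of_le_of_lt ?_ hβ)
      have : (0 : ℝ) < k := by positivity
      have : (k : ℝ) ≤ n := by exact_mod_cast hk.le
      rw [neg_div, neg_div, neg_le_neg_iff]
      gcongr
  rcases Nat.lt_or_ge n 2 with h | h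
  · have : fw (ι := Fin n) (wt p β) = fun _ => 1 := by
      funext x
      have : Subsingleton (Fin n) := by
        interval_cases n <;> infer_instance
      unfold fw
      refine Finset.prod_eq_one fun i _ => Finset.prod_eq_one fun j _ => ?_
      rw [if_pos (Subsingleton.elim _ _)]
    unfold Int
    rw [this]
    exact integrable_const _
  obtain ⟨C, hC, hb⟩ := JJ_bound p β n (by omega) ih' univ
  rw [mu_eq_muT] at hb
  simp only [Finset.card_univ, ZMod.card] at hb
  have hth := theta_lt p β n h hβ
  set r := (p : ENNReal) * theta p β n with hr
  have hM : ∀ m : ℕ, JJ p β n m (mu p) ≤ (1 - r)⁻¹ * C := by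
    intro m
    have hfin : JJ p β n m (mu p) ≠ ⊤ := by
      refine (lt_of_le_of_lt (lintegral_mono fun x => min_le_right _ _) ?_).ne
      simp
    have h2 : (1 - r) * JJ p β n m (mu p) ≤ C := by
      rw [ENNReal.sub_mul (fun _ _ => hfin), one_mul]
      exact tsub_le_iff_left.2 (hb m)
    have h3 : 1 - r ≠ 0 := (tsub_pos_of_lt hth).ne'
    have h4 : 1 - r ≠ ⊤ := (lt_of_le_of_lt tsub_le_self ENNReal.one_lt_top).ne
    calc JJ p β n m (mu p) = (1 - r)⁻¹ * ((1 - r) * JJ p β n m (mu p)) := by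
          rw [← mul_assoc, ENNReal.inv_mul_cancel h3 h4, one_mul]
      _ ≤ _ := by gcongr
  refine ⟨(fw_measurable (wt_meas p β)).aestronglyMeasurable, ?_⟩
  have htend : Filter.Tendsto (fun m : ℕ => JJ p β n m (mu p)) Filter.atTop
      (nhds (∫⁻ x : Fin n → ℤ_[p], ‖fw (wt p β) x‖ₑ ∂(Measure.pi fun _ => mu p))) := by
    refine lintegral_tendsto_of_tendsto_of_monotone (fun m => ?_) ?_ ?_
    · exact ((fw_measurable (wt_meas p β)).enorm.min measurable_const).aemeasurable
    · refine Filter.Eventually.of_forall fun x a b hab => ?_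
      exact min_le_min le_rfl (by exact_mod_cast hab)
    · refine Filter.Eventually.of_forall fun x => ?_
      have : Filter.Tendsto (fun m : ℕ => min ‖fw (wt p β) x‖ₑ (m : ENNReal)) Filter.atTop
          (nhds (min ‖fw (wt p β) x‖ₑ ⊤)) :=
        tendsto_const_nhds.min ENNReal.tendsto_nat_nhds_top
      simpa using this
  refine lt_of_le_of_lt (le_of_tendsto' htend hM) ?_
  refine ENNReal.mul_lt_top ?_ hC.lt_top
  exact ENNReal.inv_lt_top.2 (tsub_pos_of_lt hth)

end Conv

section Rec

open Finset

variable (p : ℕ) [Fact p.Prime] (β : ℂ)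

noncomputable def PP (z : ℂ) : ℂ := Complex.exp ((Real.log p : ℂ) * z)

lemma PP_add (x y : ℂ) : PP p (x + y) = PP p x * PP p y := by
  unfold PP; rw [mul_add, Complex.exp_add]

lemma PP_zero : PP p 0 = 1 := by simp [PP]

lemma PP_nat (z : ℂ) (n : ℕ) : PP p z ^ n = PP p (n * z) := by
  unfold PP; rw [← Complex.exp_nat_mul]; ring_nf

lemma PP_one : PP p 1 = p := by
  have hp0 : (0 : ℝ) < p := by exact_mod_cast (Fact.out : p.Prime).pos
  unfold PP
  rw [mul_one, ← Complex.ofReal_exp, Real.exp_log hp0]; simp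

lemma kap_PP : kap p β = PP p (-(β / 2)) := by
  have hp0 : (0 : ℝ) < p := by exact_mod_cast (Fact.out : p.Prime).pos
  unfold kap PP
  rw [Complex.cpow_def_of_ne_zero (by exact_mod_cast (inv_pos.2 hp0).ne'),
    ← Complex.ofReal_log (by positivity), Real.log_inv]
  push_cast
  ring_nf

lemma pinv_PP : (pinv p : ℂ) = PP p (-1) := by
  have h := pinv_mul p
  have h2 : (pinv p : ℂ) * p = 1 := by exact_mod_cast congrArg (fun x : NNReal => ((x : ℝ) : ℂ)) h
  have h3 : PP p (-1) * p = 1 := by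
    rw [← PP_one, ← PP_add]; simp [PP_zero]
  have hp0 : (p : ℂ) ≠ 0 := by exact_mod_cast (Fact.out : p.Prime).ne_zero
  exact mul_right_cancel₀ hp0 (h2.trans h3.symm)

lemma choose_two (n : ℕ) : (n.choose 2 : ℂ) = n * (n - 1) / 2 := Nat.cast_choose_two ℂ n

noncomputable def Phi (n : ℕ) : ℂ := PP p (-((n.choose 2 : ℂ) * β / 2)) *
  (GG (wt p β) (mu p) n / n.factorial)

lemma b_eq (n : ℕ) : GG (wt p β) (mu p) n / n.factorial = PP p ((n.choose 2 : ℂ) * β / 2) * Phi p β n := by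
  unfold Phi
  rw [← mul_assoc, ← PP_add, add_neg_cancel, PP_zero, one_mul]

lemma a_eq (n : ℕ) : PowerSeries.coeff n (fser p β) =
    PP p (-(n : ℂ) - (n.choose 2 : ℂ) * β / 2) * Phi p β n := by
  unfold fser
  rw [PowerSeries.coeff_mk, mul_div_assoc, mul_div_assoc, b_eq, pinv_PP, kap_PP, ← pow_mul, PP_nat, PP_nat,
    ← mul_assoc, ← mul_assoc, ← PP_add, ← PP_add]
  congr 2
  rcases n with _ | n
  · simp
  · rw [choose_two]
    push_cast
    simp
    ring

lemma pow_rec (f : PowerSeries ℂ) (q n : ℕ) :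
    ∑ k ∈ range (n + 1), ((n - k : ℕ) : ℂ) * (PowerSeries.coeff k f * PowerSeries.coeff (n - k) (f ^ q)) =
    q * ∑ k ∈ range (n + 1), (k : ℂ) * (PowerSeries.coeff k f * PowerSeries.coeff (n - k) (f ^ q)) := by
  have hD : ∀ (g : PowerSeries ℂ) m, PowerSeries.coeff m (PowerSeries.X * PowerSeries.derivative ℂ g) =
      m * PowerSeries.coeff m g := by
    intro g m
    rcases m with _ | m
    · simp
    · rw [PowerSeries.coeff_succ_X_mul, PowerSeries.coeff_derivative]
      push_cast; ring
  have key : f * (PowerSeries.X * PowerSeries.derivative ℂ (f ^ q)) =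
      (q : PowerSeries ℂ) * ((PowerSeries.X * PowerSeries.derivative ℂ f) * f ^ q) := by
    rw [Derivation.leibniz_pow]
    rcases q with _ | q
    · simp
    · simp only [Nat.add_sub_cancel, nsmul_eq_mul, smul_eq_mul]
      ring
  have h2 := congrArg (PowerSeries.coeff n) key
  have hq : (q : PowerSeries ℂ) = PowerSeries.C (q : ℂ) := by simp
  rw [hq, PowerSeries.coeff_C_mul, PowerSeries.coeff_mul, PowerSeries.coeff_mul,
    Finset.Nat.sum_antidiagonal_eq_sum_range_succ_mk, Finset.Nat.sum_antidiagonal_eq_sum_range_succ_mk] at h2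
  simp only [hD] at h2
  refine Eq.trans (Finset.sum_congr rfl fun k _ => ?_) (h2.trans ?_)
  · ring
  · congr 1
    refine Finset.sum_congr rfl fun k _ => ?_
    ring

noncomputable def EE (n : ℕ) : ℂ := (n : ℂ) + (n.choose 2 : ℂ) * β

lemma ab_eq (n k : ℕ) (hk : k ≤ n) (hn : n ≠ 0) :
    (GG (wt p β) (mu p) k / k.factorial) * PowerSeries.coeff (n - k) (fser p β) =
    PP p (-(n : ℂ) / 2 - EE β n * (1 - 2 * k / n) / 2) * (Phi p β (n - k) * Phi p β k) := by
  have hn' : (n : ℂ) ≠ 0 := by exact_mod_cast hn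
  rw [b_eq, a_eq, mul_mul_mul_comm, ← PP_add, mul_comm (Phi p β k)]
  congr 2
  unfold EE
  rw [choose_two, choose_two, choose_two]
  push_cast [Nat.cast_sub hk]
  field_simp
  ring

lemma ab_eq' (n k : ℕ) (hk : k ≤ n) (hn : n ≠ 0) :
    PowerSeries.coeff k (fser p β) * (GG (wt p β) (mu p) (n - k) / (n - k).factorial) =
    PP p (-(n : ℂ) / 2 + EE β n * (1 - 2 * k / n) / 2) * (Phi p β (n - k) * Phi p β k) := by
  have hn' : (n : ℂ) ≠ 0 := by exact_mod_cast hn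
  have := ab_eq p β n (n - k) (by omega) hn
  rw [Nat.sub_sub_self hk, mul_comm] at this
  rw [this, mul_comm (Phi p β k)]
  congr 2
  push_cast [Nat.cast_sub hk]
  field_simp
  ring

lemma int_all (N : ℕ) (hβ : -2 / (N : ℝ) < β.re) : ∀ k ≤ N, Int (wt p β) (mu p) k := by
  intro k hk
  rcases Nat.eq_zero_or_pos k with rfl | h0
  · unfold Int
    have : fw (ι := Fin 0) (wt p β) = fun _ => 1 := by funext x; simp [fw]
    rw [this]
    exact integrable_const _
  refine conv p β k (lt_of_le_of_lt ?_ hβ)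
  have : (0 : ℝ) < k := by positivity
  have : (k : ℝ) ≤ N := by exact_mod_cast hk
  rw [neg_div, neg_div, neg_le_neg_iff]
  gcongr

lemma sinh_rec (N n : ℕ) (hn : n ≠ 0) (hnN : n ≤ N) (hβ : -2 / (N : ℝ) < β.re) :
    ∑ k ∈ range (n + 1), (k : ℂ) * Complex.sinh (((Real.log p : ℂ) / 2) *
      (EE β n * (1 - 2 * (k : ℂ) / n) + 1)) * (Phi p β (n - k) * Phi p β k) = 0 := by
  have hint : ∀ k ≤ n, Int (wt p β) (mu p) k := fun k hk => int_all p β N hβ k (hk.trans hnN)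
  have hco : ∀ k ≤ n, PowerSeries.coeff k (fser p β ^ p) = GG (wt p β) (mu p) k / k.factorial := by
    intro k hk
    have := (muT_GG p β n hint univ k hk).2
    rw [mu_eq_muT, Finset.card_univ, ZMod.card] at this
    exact this.symm
  have h := pow_rec (fser p β) p n
  have h1 : ∑ k ∈ range (n + 1), ((n - k : ℕ) : ℂ) * (PowerSeries.coeff k (fser p β) *
      PowerSeries.coeff (n - k) (fser p β ^ p)) = ∑ k ∈ range (n + 1), (k : ℂ) *
      (PP p (-(n : ℂ) / 2 - EE β n * (1 - 2 * k / n) / 2) * (Phi p β (n - k) * Phi p β k)) := by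
    rw [← Finset.sum_range_reflect]
    refine Finset.sum_congr rfl fun k hk => ?_
    have hk' : k ≤ n := by simpa [Nat.lt_succ_iff] using hk
    simp only [Nat.add_sub_cancel]
    rw [Nat.sub_sub_self hk', hco k hk', ← ab_eq p β n k hk' hn]
    ring
  have h2 : ∑ k ∈ range (n + 1), (k : ℂ) * (PowerSeries.coeff k (fser p β) *
      PowerSeries.coeff (n - k) (fser p β ^ p)) = ∑ k ∈ range (n + 1), (k : ℂ) *
      (PP p (-(n : ℂ) / 2 + EE β n * (1 - 2 * k / n) / 2) * (Phi p β (n - k) * Phi p β k)) := by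
    refine Finset.sum_congr rfl fun k hk => ?_
    have hk' : k ≤ n := by simpa [Nat.lt_succ_iff] using hk
    rw [hco (n - k) (by omega), ab_eq' p β n k hk' hn]
  rw [h1, h2, ← PP_one p, Finset.mul_sum, eq_comm, ← sub_eq_zero, ← Finset.sum_sub_distrib] at h
  have hne : 2 * PP p ((1 - n) / 2) ≠ 0 := mul_ne_zero two_ne_zero (Complex.exp_ne_zero _)
  refine mul_left_cancel₀ hne ?_
  rw [mul_zero, ← h, Finset.mul_sum]
  refine Finset.sum_congr rfl fun k hk => ?_
  have hs : Complex.sinh (((Real.log p : ℂ) / 2) * (EE β n * (1 - 2 * (k : ℂ) / n) + 1)) =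
      (PP p ((EE β n * (1 - 2 * (k : ℂ) / n) + 1) / 2) - PP p (-((EE β n * (1 - 2 * (k : ℂ) / n) + 1) / 2))) / 2 := by
    unfold PP Complex.sinh
    congr 3 <;> ring
  rw [hs]
  have e1 : PP p 1 * PP p (-(n : ℂ) / 2 + EE β n * (1 - 2 * k / n) / 2) = 
      PP p ((1 - n) / 2) * PP p ((EE β n * (1 - 2 * (k : ℂ) / n) + 1) / 2) := by
    rw [← PP_add, ← PP_add]; congr 1; ring
  have e2 : PP p (-(n : ℂ) / 2 - EE β n * (1 - 2 * k / n) / 2) = 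
      PP p ((1 - n) / 2) * PP p (-((EE β n * (1 - 2 * (k : ℂ) / n) + 1) / 2)) := by
    rw [← PP_add]; congr 1; ring
  rw [e2]
  linear_combination -(k : ℂ) * (Phi p β (n - k) * Phi p β k) * e1

lemma sinh_ne {z : ℂ} (hz : 0 < z.re) : Complex.sinh z ≠ 0 := by
  intro h
  unfold Complex.sinh at h
  have h2 : Complex.exp z = Complex.exp (-z) := by
    linear_combination 2 * h
  have h3 := congrArg norm h2
  rw [Complex.norm_exp, Complex.norm_exp, Real.exp_eq_exp] at h3
  simp at h3
  linarith

lemma Phi_one : Phi p β 1 = 1 := by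
  unfold Phi GG fw
  simp [PP]

lemma Phi_F (N : ℕ) (hβ : -2 / (N : ℝ) < β.re) (n : ℕ) (hn : n ≤ N) :
    Phi p β n = F n (Real.log p) β := by
  induction n using Nat.strong_induction_on with
  | _ n ih =>
  match n, hn, ih with
  | 0, _, _ => simp [Phi, GG_zero, PP, F]
  | 1, _, _ => rw [Phi_one, F]
  | m + 2, hn, ih =>
    have hp1 : (1 : ℝ) < p := by exact_mod_cast (Fact.out : p.Prime).one_lt
    have hlog : 0 < Real.log p := Real.log_pos hp1
    have h := sinh_rec p β N (m + 2) (by omega) hn hβ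
    rw [Finset.sum_range_succ, Nat.sub_self, Finset.sum_range_succ'] at h
    have hP0 : Phi p β 0 = 1 := by simp [Phi, GG_zero, PP]
    rw [hP0] at h
    have hm0 : ((m + 2 : ℕ) : ℂ) ≠ 0 := by exact_mod_cast (by omega : m + 2 ≠ 0)
    have hs : Complex.sinh (((Real.log p : ℂ) / 2) * (EE β (m + 2) - 1)) ≠ 0 := by
      refine sinh_ne ?_
      have : ((Real.log p : ℂ) / 2) = ((Real.log p / 2 : ℝ) : ℂ) := by push_cast; rfl
      rw [this, Complex.re_ofReal_mul]
      refine mul_pos (by positivity) ?_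
      have hE : EE β (m + 2) - 1 = ((m + 1 : ℝ) : ℂ) * (1 + ((m + 2 : ℝ) / 2 : ℝ) * β) := by
        unfold EE; rw [choose_two]; push_cast; ring
      rw [hE, Complex.re_ofReal_mul]
      refine mul_pos (by positivity) ?_
      rw [Complex.add_re, Complex.re_ofReal_mul, Complex.one_re]
      have hN : ((m : ℝ) + 2) ≤ N := by exact_mod_cast hn
      have hN0 : (0 : ℝ) < N := by have : (0 : ℝ) ≤ m := by positivity
                                   linarith
      rw [div_lt_iff₀ hN0] at hβ
      have : (0 : ℝ) ≤ m := by positivity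
      by_cases hb : 0 ≤ β.re
      · positivity
      · push Not at hb
        nlinarith
    have e1 : Complex.sinh (((Real.log p : ℂ) / 2) *
        (EE β (m + 2) * (1 - 2 * ((m + 2 : ℕ) : ℂ) / ((m + 2 : ℕ) : ℂ)) + 1)) =
        - Complex.sinh (((Real.log p : ℂ) / 2) * (EE β (m + 2) - 1)) := by
      rw [← Complex.sinh_neg]
      congr 1
      field_simp
      ring
    rw [e1] at h
    rw [F, Finset.sum_attach (Finset.Icc 1 (m + 1)) (fun k => (((k : ℕ) : ℂ) / ((m : ℂ) + 2)) * rho (m + 2) k (Real.log p) β *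
        F (m + 2 - (k : ℕ)) (Real.log p) β * F (k : ℕ) (Real.log p) β)]
    have e2 : ∑ k ∈ Finset.Icc 1 (m + 1), (((k : ℕ) : ℂ) / ((m : ℂ) + 2)) * rho (m + 2) k (Real.log p) β *
        F (m + 2 - (k : ℕ)) (Real.log p) β * F (k : ℕ) (Real.log p) β = 
        (∑ k ∈ range (m + 1), ((k + 1 : ℕ) : ℂ) * Complex.sinh (((Real.log p : ℂ) / 2) *
          (EE β (m + 2) * (1 - 2 * ((k + 1 : ℕ) : ℂ) / ((m + 2 : ℕ) : ℂ)) + 1)) *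
          (Phi p β (m + 2 - (k + 1)) * Phi p β (k + 1))) / 
          (((m + 2 : ℕ) : ℂ) * Complex.sinh (((Real.log p : ℂ) / 2) * (EE β (m + 2) - 1))) := by
      rw [← Finset.Ico_add_one_right_eq_Icc, Finset.sum_Ico_eq_sum_range, Finset.sum_div]
      refine Finset.sum_congr rfl fun k hk => ?_
      have hk' : k < m + 1 := by simpa using hk
      rw [add_comm 1 k, ih (k + 1) (by omega) (by omega), ih (m + 2 - (k + 1)) (by omega) (by omega)]
      unfold rho
      rw [if_neg hlog.ne']
      unfold EE at *
      push_cast at *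
      field_simp
    rw [e2, eq_div_iff (mul_ne_zero hm0 hs)]
    linear_combination -h

lemma final_sum (N : ℕ) (hN : N ≠ 0) (hβ : -2 / (N : ℝ) < β.re) :
    ((p : ℂ) / (p + 1)) ^ N * ∑ k ∈ range (N + 1), (GG (wt p β) (mu p) k / k.factorial) *
      PowerSeries.coeff (N - k) (fser p β) = 
    ∑ k ∈ Finset.range (N + 1),
        Complex.cosh (((Real.log p : ℂ) / 2) * ((N : ℂ) + (N.choose 2 : ℂ) * β) *
              (1 - 2 * (k : ℂ) / (N : ℂ))) /
            (2 * Complex.cosh ((Real.log p : ℂ) / 2)) ^ N *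
          F (N - k) (Real.log p) β * F k (Real.log p) β := by
  have h1 : ∑ k ∈ range (N + 1), (GG (wt p β) (mu p) k / k.factorial) *
      PowerSeries.coeff (N - k) (fser p β) = ∑ k ∈ range (N + 1), 
      PP p (-(N : ℂ) / 2 - EE β N * (1 - 2 * k / N) / 2) * (Phi p β (N - k) * Phi p β k) := by
    refine Finset.sum_congr rfl fun k hk => ?_
    have hk' : k ≤ N := by simpa [Nat.lt_succ_iff] using hk
    rw [ab_eq p β N k hk' hN]
  have h2 : ∑ k ∈ range (N + 1), (GG (wt p β) (mu p) k / k.factorial) *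
      PowerSeries.coeff (N - k) (fser p β) = ∑ k ∈ range (N + 1), 
      PP p (-(N : ℂ) / 2 + EE β N * (1 - 2 * k / N) / 2) * (Phi p β (N - k) * Phi p β k) := by
    rw [← Finset.sum_range_reflect]
    refine Finset.sum_congr rfl fun k hk => ?_
    have hk' : k ≤ N := by simpa [Nat.lt_succ_iff] using hk
    simp only [Nat.add_sub_cancel]
    rw [Nat.sub_sub_self hk', ← ab_eq' p β N k hk' hN, mul_comm]
  have h3 : ∑ k ∈ range (N + 1), (GG (wt p β) (mu p) k / k.factorial) *
      PowerSeries.coeff (N - k) (fser p β) = ∑ k ∈ range (N + 1), PP p (-(1 / 2)) ^ N * 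
      (Complex.cosh (((Real.log p : ℂ) / 2) * ((N : ℂ) + (N.choose 2 : ℂ) * β) *
              (1 - 2 * (k : ℂ) / (N : ℂ))) * (Phi p β (N - k) * Phi p β k)) := by
    have h4 : ∀ s : ℂ, s = (s + s) / 2 := fun s => by ring
    rw [h4 (∑ k ∈ range (N + 1), (GG (wt p β) (mu p) k / k.factorial) *
      PowerSeries.coeff (N - k) (fser p β))]
    nth_rw 1 [h1]
    rw [h2, ← Finset.sum_add_distrib, Finset.sum_div]
    refine Finset.sum_congr rfl fun k hk => ?_
    rw [PP_nat]
    have e0 : (N : ℂ) * (-(1 / 2)) = -(N : ℂ) / 2 := by ring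
    rw [e0, sub_eq_add_neg, PP_add, PP_add]
    have hc : Complex.cosh (((Real.log p : ℂ) / 2) * ((N : ℂ) + (N.choose 2 : ℂ) * β) *
              (1 - 2 * (k : ℂ) / (N : ℂ))) = (PP p (EE β N * (1 - 2 * k / N) / 2) + 
                PP p (-(EE β N * (1 - 2 * k / N) / 2))) / 2 := by
      unfold PP Complex.cosh EE
      congr 3 <;> ring
    rw [hc]
    ring
  rw [h3, Finset.mul_sum]
  refine Finset.sum_congr rfl fun k hk => ?_
  have hk' : k ≤ N := by simpa [Nat.lt_succ_iff] using hk
  rw [Phi_F p β N hβ (N - k) (by omega), Phi_F p β N hβ k hk']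
  have h5 : (p : ℂ) / (p + 1) * PP p (-(1 / 2)) = (2 * Complex.cosh ((Real.log p : ℂ) / 2))⁻¹ := by
    have hc : 2 * Complex.cosh ((Real.log p : ℂ) / 2) = PP p (1 / 2) + PP p (-(1 / 2)) := by
      unfold PP Complex.cosh
      rw [mul_div_cancel₀ _ two_ne_zero]
      congr 2 <;> ring
    have e1 : PP p (1 / 2) * PP p (1 / 2) = p := by
      rw [← PP_add, ← PP_one p]; norm_num
    have e2 : PP p (1 / 2) * PP p (-(1 / 2)) = 1 := by
      rw [← PP_add]; simp [PP_zero]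
    have hp1 : (p : ℂ) + 1 ≠ 0 := by exact_mod_cast Nat.succ_ne_zero p
    rw [hc]
    refine eq_inv_of_mul_eq_one_left ?_
    rw [div_mul_eq_mul_div, div_mul_eq_mul_div, div_eq_one_iff_eq hp1]
    have e3 : PP p (-(1 / 2)) * PP p (-(1 / 2)) * p = 1 := by
      rw [← e1]; linear_combination (PP p (1 / 2) * PP p (-(1 / 2)) + 1) * e2
    linear_combination (p : ℂ) * e2 + e3
  calc _ = ((p : ℂ) / (p + 1) * PP p (-(1 / 2))) ^ N * (Complex.cosh (((Real.log p : ℂ) / 2) * ((N : ℂ) + (N.choose 2 : ℂ) * β) *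
              (1 - 2 * (k : ℂ) / (N : ℂ))) * (F (N - k) (Real.log p) β * F k (Real.log p) β)) := by
        rw [mul_pow]; ring
    _ = _ := by
        rw [h5, inv_pow]; ring

end Rec

/-! ### The projective line -/

section Proj

open Finset

variable (p : ℕ) [Fact p.Prime]

lemma rep_mk (v : Fin 2 → ℚ_[p]) (hv : v ≠ 0) : ∃ a : ℚ_[p], a ≠ 0 ∧
    (Projectivization.mk ℚ_[p] v hv : P1 p).rep = a • v := by
  obtain ⟨a, ha⟩ := Projectivization.exists_smul_eq_mk_rep ℚ_[p] v hv
  exact ⟨a, a.ne_zero, ha.symm⟩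

lemma mulVec_ne (A B : Matrix (Fin 2) (Fin 2) ℚ_[p]) (h : A * B = 1) (v : Fin 2 → ℚ_[p]) (hv : v ≠ 0) :
    B.mulVec v ≠ 0 := by
  intro h0
  apply hv
  have : A.mulVec (B.mulVec v) = v := by rw [Matrix.mulVec_mulVec, h, Matrix.one_mulVec]
  rw [← this, h0, Matrix.mulVec_zero]

lemma rep_mobius (A B : Matrix (Fin 2) (Fin 2) ℚ_[p]) (h : A * B = 1) (ξ : P1 p) :
    ∃ a : ℚ_[p], a ≠ 0 ∧ (mobius p B ξ).rep = a • B.mulVec ξ.rep := by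
  unfold mobius
  rw [dif_pos (mulVec_ne p A B h _ ξ.rep_nonzero)]
  exact rep_mk p _ _

lemma mobius_mobius (A B : Matrix (Fin 2) (Fin 2) ℚ_[p]) (h : A * B = 1) (ξ : P1 p) :
    mobius p A (mobius p B ξ) = ξ := by
  obtain ⟨a, ha, hr⟩ := rep_mobius p A B h ξ
  have e : A.mulVec (mobius p B ξ).rep = a • ξ.rep := by
    rw [hr, Matrix.mulVec_smul, Matrix.mulVec_mulVec, h, Matrix.one_mulVec]
  have hne : A.mulVec (mobius p B ξ).rep ≠ 0 := by
    rw [e]; exact smul_ne_zero ha ξ.rep_nonzero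
  have e2 : mobius p A (mobius p B ξ) = Projectivization.mk ℚ_[p] _ hne := by
    rw [mobius.eq_def p A, dif_pos hne]
  rw [e2]
  conv_rhs => rw [← ξ.mk_rep]
  rw [Projectivization.mk_eq_mk_iff']
  exact ⟨a, e.symm⟩

lemma nu_pre (ν : Measure (P1 p)) (hν : IsGLInvariant p ν) (A B : Matrix (Fin 2) (Fin 2) ℚ_[p])
    (hAB : A * B = 1) (hB : ∀ i j, ‖B i j‖ ≤ 1) (hd : ‖B.det‖ = 1) (M : Set (P1 p))
    (hM : MeasurableSet M) : ν (mobius p A ⁻¹' M) = ν M := by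
  have hBA : B * A = 1 := mul_eq_one_comm.1 hAB
  rw [← hν B hB hd M hM]
  congr 1
  ext ξ
  constructor
  · intro h
    exact ⟨_, h, mobius_mobius p B A hBA ξ⟩
  · rintro ⟨η, hη, rfl⟩
    change mobius p A (mobius p B η) ∈ M
    rw [mobius_mobius p A B hAB]; exact hη

variable (c : ℚ_[p]) (i j : Fin 2)

def mkZ (x : ℚ_[p]) (h : ‖x‖ ≤ 1) : ℤ_[p] := ⟨x, h⟩

open Classical in
noncomputable def chv (v : Fin 2 → ℚ_[p]) : ℤ_[p] :=
  if h : ‖v i‖ ≤ ‖c * v j‖ then mkZ p (v i / (c * v j)) (by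
    rw [norm_div]; exact div_le_one_of_le₀ h (norm_nonneg _)) else 0

lemma chv_pos (v : Fin 2 → ℚ_[p]) (h : ‖v i‖ ≤ ‖c * v j‖) :
    (chv p c i j v : ℚ_[p]) = v i / (c * v j) := by
  unfold chv; rw [dif_pos h]; rfl

lemma chv_neg (v : Fin 2 → ℚ_[p]) (h : ¬ ‖v i‖ ≤ ‖c * v j‖) : chv p c i j v = 0 := by
  unfold chv; rw [dif_neg h]

noncomputable def Ch (ξ : P1 p) : ℤ_[p] := chv p c i j ξ.rep

def Dom : Set (P1 p) := {ξ | ‖ξ.rep i‖ ≤ ‖c * ξ.rep j‖}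

lemma cond_smul (a : ℚ_[p]) (ha : a ≠ 0) (v : Fin 2 → ℚ_[p]) :
    ‖(a • v) i‖ ≤ ‖c * (a • v) j‖ ↔ ‖v i‖ ≤ ‖c * v j‖ := by
  have : c * (a • v) j = a * (c * v j) := by simp; ring
  rw [this, Pi.smul_apply, smul_eq_mul, norm_mul, norm_mul]
  exact mul_le_mul_iff_right₀ (norm_pos_iff.2 ha)

lemma chv_smul (a : ℚ_[p]) (ha : a ≠ 0) (v : Fin 2 → ℚ_[p]) :
    chv p c i j (a • v) = chv p c i j v := by
  have h := cond_smul p c i j a ha v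
  by_cases h1 : ‖v i‖ ≤ ‖c * v j‖
  · apply Subtype.ext
    change (chv p c i j (a • v) : ℚ_[p]) = (chv p c i j v : ℚ_[p])
    rw [chv_pos p c i j _ h1, chv_pos p c i j _ (h.2 h1)]
    have : c * (a • v) j = a * (c * v j) := by simp; ring
    rw [this, Pi.smul_apply, smul_eq_mul, mul_div_mul_left _ _ ha]
  · rw [chv_neg p c i j _ h1, chv_neg p c i j _ (fun h2 => h1 (h.1 h2))]

lemma cond_ne' (hc : c ≠ 0) (hij : i ≠ j) (v : Fin 2 → ℚ_[p]) (hv : v ≠ 0) (h : ‖v i‖ ≤ ‖c * v j‖) :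
    c * v j ≠ 0 := by
  intro h0
  rw [h0, norm_zero, norm_le_zero_iff] at h
  rw [mul_eq_zero] at h0
  have h1 := h0.resolve_left hc
  apply hv
  funext k
  have : k = i ∨ k = j := by fin_cases i <;> fin_cases j <;> fin_cases k <;> simp_all
  rcases this with rfl | rfl <;> assumption

abbrev VV := {v : Fin 2 → ℚ_[p] // v ≠ 0}

def condS : Set (VV p) := {v | ‖v.1 i‖ ≤ ‖c * v.1 j‖}

lemma ratio_cont (v : VV p) (h : c * v.1 j ≠ 0) : ContinuousAt (fun v : VV p => v.1 i / (c * v.1 j)) v := by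
  have h1 : Continuous fun v : VV p => v.1 i := (continuous_apply i).comp continuous_subtype_val
  have h2 : Continuous fun v : VV p => c * v.1 j :=
    continuous_const.mul ((continuous_apply j).comp continuous_subtype_val)
  exact h1.continuousAt.div h2.continuousAt h

lemma condS_open (hc : c ≠ 0) (hij : i ≠ j) : IsOpen (condS p c i j) := by
  rw [isOpen_iff_mem_nhds]
  intro v hv
  have hne := cond_ne' p c i j hc hij v.1 v.2 hv
  have h1 := ratio_cont p c i j v hne
  have h2 : Continuous fun v : VV p => c * v.1 j :=
    continuous_const.mul ((continuous_apply j).comp continuous_subtype_val)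
  have h3 : ∀ᶠ u in nhds v, c * u.1 j ≠ 0 := h2.continuousAt.eventually_ne hne
  have hopen : IsOpen (Metric.closedBall (0 : ℚ_[p]) 1) := IsUltrametricDist.isOpen_closedBall _ one_ne_zero
  have hm : v.1 i / (c * v.1 j) ∈ Metric.closedBall (0 : ℚ_[p]) 1 := by
    rw [mem_closedBall_zero_iff, norm_div]
    exact div_le_one_of_le₀ hv (norm_nonneg _)
  filter_upwards [h3, h1.eventually_mem (hopen.mem_nhds hm)] with u hu hu2
  rw [mem_closedBall_zero_iff, norm_div, div_le_one (norm_pos_iff.2 hu)] at hu2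
  exact hu2

lemma condS_closed : IsClosed (condS p c i j) := by
  refine isClosed_le (Continuous.norm ?_) (Continuous.norm ?_)
  · exact (continuous_apply i).comp continuous_subtype_val
  · exact continuous_const.mul ((continuous_apply j).comp continuous_subtype_val)

lemma chv_cont (hc : c ≠ 0) (hij : i ≠ j) : Continuous fun v : VV p => chv p c i j v.1 := by
  rw [continuous_iff_continuousAt]
  intro v
  by_cases hv : v ∈ condS p c i j
  · have h1 := ratio_cont p c i j v (cond_ne' p c i j hc hij v.1 v.2 hv)
    have hind : Topology.IsInducing (fun x : ℤ_[p] => (x : ℚ_[p])) := ⟨rfl⟩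
    refine hind.continuousAt_iff.2 ?_
    refine h1.congr ?_
    filter_upwards [(condS_open p c i j hc hij).mem_nhds hv] with u hu
    have hu' : ‖u.1 i‖ ≤ ‖c * u.1 j‖ := hu
    exact (chv_pos p c i j _ hu').symm
  · refine (continuousAt_const (y := (0 : ℤ_[p]))).congr ?_
    filter_upwards [(condS_closed p c i j).isOpen_compl.mem_nhds hv] with u hu
    have hu' : ¬ ‖u.1 i‖ ≤ ‖c * u.1 j‖ := hu
    exact (chv_neg p c i j _ hu').symm

noncomputable def qmk (v : VV p) : P1 p := Projectivization.mk ℚ_[p] v.1 v.2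

lemma qmk_quot : Topology.IsQuotientMap (qmk p) := isQuotientMap_quotient_mk'

lemma Ch_cont (hc : c ≠ 0) (hij : i ≠ j) : Continuous (Ch p c i j) := by
  rw [(qmk_quot p).continuous_iff]
  convert chv_cont p c i j hc hij using 1
  funext v
  obtain ⟨a, ha, h⟩ := rep_mk p v.1 v.2
  simp only [Function.comp, Ch, qmk]
  rw [h, chv_smul p c i j a ha]

lemma Dom_open (hc : c ≠ 0) (hij : i ≠ j) : IsOpen (Dom p c i j) := by
  rw [← (qmk_quot p).isOpen_preimage]
  convert condS_open p c i j hc hij using 1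
  ext v
  obtain ⟨a, ha, h⟩ := rep_mk p v.1 v.2
  change ‖(qmk p v).rep i‖ ≤ ‖c * (qmk p v).rep j‖ ↔ ‖v.1 i‖ ≤ ‖c * v.1 j‖
  unfold qmk
  rw [h, cond_smul p c i j a ha]

lemma tv_mulVec (hij : i ≠ j) (b : ℚ_[p]) (v : Fin 2 → ℚ_[p]) :
    (Matrix.transvection i j b).mulVec v = v + Pi.single i (b * v j) := by
  unfold Matrix.transvection
  rw [Matrix.add_mulVec, Matrix.one_mulVec, Matrix.single_mulVec]
  rfl

lemma Ch_mobius (hc : c ≠ 0) (hij : i ≠ j) (b : ℤ_[p]) (ξ : P1 p) :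
    let T := mobius p (Matrix.transvection i j (c * b)) ξ
    (T ∈ Dom p c i j ↔ ξ ∈ Dom p c i j) ∧ (ξ ∈ Dom p c i j → Ch p c i j T = b + Ch p c i j ξ) := by
  intro T
  obtain ⟨a, ha, hr⟩ := rep_mobius p (Matrix.transvection i j (-(c * b))) (Matrix.transvection i j (c * b))
    (by rw [Matrix.transvection_mul_transvection_same i j hij]; simp) ξ
  have hr' : T.rep = a • (ξ.rep + Pi.single i (c * b * ξ.rep j)) := by
    rw [← tv_mulVec p i j hij]; exact hr
  set v := ξ.rep with hv
  set u := v + Pi.single i (c * b * v j) with hu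
  have ui : u i = v i + b * (c * v j) := by simp [hu]; ring
  have uj : u j = v j := by simp [hu, hij.symm]
  have hb : ‖(b : ℚ_[p]) * (c * v j)‖ ≤ ‖c * v j‖ := by
    rw [norm_mul]
    exact mul_le_of_le_one_left (norm_nonneg _) b.norm_le_one
  have hcond : ‖u i‖ ≤ ‖c * u j‖ ↔ ‖v i‖ ≤ ‖c * v j‖ := by
    rw [ui, uj]
    constructor
    · intro h
      have := IsUltrametricDist.norm_add_le_max (v i + b * (c * v j)) (-(b * (c * v j)))
      rw [add_neg_cancel_right, norm_neg] at this
      exact this.trans (max_le h hb)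
    · intro h
      exact (IsUltrametricDist.norm_add_le_max _ _).trans (max_le h hb)
  refine ⟨?_, ?_⟩
  · change ‖T.rep i‖ ≤ ‖c * T.rep j‖ ↔ _
    rw [hr', cond_smul p c i j a ha]
    exact hcond
  · intro h
    have h' : ‖v i‖ ≤ ‖c * v j‖ := h
    have hne := cond_ne' p c i j hc hij v ξ.rep_nonzero h'
    unfold Ch
    rw [hr', chv_smul p c i j a ha]
    apply Subtype.ext
    change (chv p c i j u : ℚ_[p]) = ((b + chv p c i j v : ℤ_[p]) : ℚ_[p])
    rw [PadicInt.coe_add, chv_pos p c i j _ (hcond.2 h'), chv_pos p c i j _ h', ui, uj,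
      add_div, mul_div_cancel_right₀ _ hne, add_comm]

lemma map_Ch (ν : Measure (P1 p)) [IsProbabilityMeasure ν] (hν : IsGLInvariant p ν) (hc : c ≠ 0)
    (hc1 : ‖c‖ ≤ 1) (hij : i ≠ j) : ∃ k : NNReal, (ν.restrict (Dom p c i j)).map (Ch p c i j) = k • mu p ∧
      ν (Dom p c i j) = k := by
  have hm := (Ch_cont p c i j hc hij).measurable
  have hD := (Dom_open p c i j hc hij).measurableSet
  obtain ⟨k, h1, h2⟩ := haar_unique p ((ν.restrict (Dom p c i j)).map (Ch p c i j)) (by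
    intro t
    have ht : Measurable fun x : ℤ_[p] => t + x := (continuous_const.add continuous_id).measurable
    rw [Measure.map_map ht hm]
    ext M hM
    rw [Measure.map_apply (ht.comp hm) hM, Measure.map_apply hm hM,
      Measure.restrict_apply (ht.comp hm hM), Measure.restrict_apply (hm hM)]
    rw [← nu_pre p ν hν (Matrix.transvection i j (c * t)) (Matrix.transvection i j (-(c * t)))
      (by rw [Matrix.transvection_mul_transvection_same i j hij]; simp) ?_ ?_ _ ((hm hM).inter hD)]
    · congr 1
      ext ξ
      obtain ⟨e1, e2⟩ := Ch_mobius p c i j hc hij t ξ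
      simp only [Set.mem_inter_iff, Set.mem_preimage, Function.comp]
      rw [e1]
      constructor
      · rintro ⟨a, b⟩; rw [e2 b]; exact ⟨a, b⟩
      · rintro ⟨a, b⟩; rw [e2 b] at a; exact ⟨a, b⟩
    · have hct : ‖c * t‖ ≤ 1 := by
        rw [norm_mul]; exact mul_le_one₀ hc1 (norm_nonneg _) t.norm_le_one
      intro k l
      unfold Matrix.transvection
      rw [Matrix.add_apply]
      refine (IsUltrametricDist.norm_add_le_max _ _).trans (max_le ?_ ?_)
      · rw [Matrix.one_apply]; split_ifs <;> simp
      · rw [Matrix.single_apply]; split_ifs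
        · rw [norm_neg]; exact hct
        · simp
    · rw [Matrix.det_transvection_of_ne i j hij]; simp)
  refine ⟨k, h1, ?_⟩
  rw [Measure.map_apply hm MeasurableSet.univ] at h2
  simpa using h2

end Proj

section Fin

open Finset

variable (p : ℕ) [Fact p.Prime]

abbrev RR : Set (P1 p) := Dom p 1 0 1

lemma p_ne : (p : ℚ_[p]) ≠ 0 := by exact_mod_cast (Fact.out : p.Prime).ne_zero

lemma lt_iff_p (a b : ℚ_[p]) : ‖a‖ < ‖b‖ ↔ (b ≠ 0 ∧ ‖a‖ ≤ ‖(p : ℚ_[p]) * b‖) := by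
  have hp1 : (1 : ℝ) < p := by exact_mod_cast (Fact.out : p.Prime).one_lt
  constructor
  · intro h
    have hb : b ≠ 0 := by
      rintro rfl
      simp at h
      exact absurd h (not_lt.2 (norm_nonneg _))
    refine ⟨hb, ?_⟩
    have hb' := norm_pos_iff.2 hb
    have h1 : ‖a / b‖ < 1 := by rw [norm_div, div_lt_one hb']; exact h
    have h2 : ‖(mkZ p (a / b) h1.le)‖ < 1 := h1
    rw [PadicInt.norm_lt_one_iff_dvd] at h2
    obtain ⟨d, hd⟩ := h2
    have h3 : a / b = p * (d : ℚ_[p]) := by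
      have := congrArg (fun x : ℤ_[p] => (x : ℚ_[p])) hd
      simpa [mkZ] using this
    have h4 : a = d * (p * b) := by
      rw [div_eq_iff hb] at h3
      rw [h3]; ring
    rw [h4, norm_mul]
    exact mul_le_of_le_one_left (norm_nonneg _) d.norm_le_one
  · rintro ⟨hb, h⟩
    refine h.trans_lt ?_
    rw [norm_mul, Padic.norm_p]
    exact mul_lt_of_lt_one_left (norm_pos_iff.2 hb) (inv_lt_one_of_one_lt₀ hp1)

lemma compl_RR : (RR p)ᶜ = Dom p p 1 0 := by
  ext ξ
  change ¬ ‖ξ.rep 0‖ ≤ ‖1 * ξ.rep 1‖ ↔ ‖ξ.rep 1‖ ≤ ‖(p : ℚ_[p]) * ξ.rep 0‖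
  rw [one_mul, not_le, lt_iff_p]
  constructor
  · exact fun h => h.2
  · intro h
    have := cond_ne' p (p : ℚ_[p]) 1 0 (p_ne p) (by decide) _ ξ.rep_nonzero h
    exact ⟨right_ne_zero_of_mul this, h⟩

lemma pdelta_Dom (c : ℚ_[p]) (i j : Fin 2) (hc : c ≠ 0) (hc1 : ‖c‖ ≤ 1) (hij : i ≠ j) (ξ η : P1 p)
    (hξ : ξ ∈ Dom p c i j) (hη : η ∈ Dom p c i j) :
    pdelta p ξ η = ‖c‖ * ‖Ch p c i j ξ - Ch p c i j η‖ := by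
  have h1 := cond_ne' p c i j hc hij _ ξ.rep_nonzero hξ
  have h2 := cond_ne' p c i j hc hij _ η.rep_nonzero hη
  have h1' := right_ne_zero_of_mul h1
  have h2' := right_ne_zero_of_mul h2
  have hmax : ∀ v : Fin 2 → ℚ_[p], ‖v i‖ ≤ ‖c * v j‖ → max ‖v 0‖ ‖v 1‖ = ‖v j‖ := by
    intro v hv
    have : ‖v i‖ ≤ ‖v j‖ := hv.trans (by
      rw [norm_mul]; exact mul_le_of_le_one_left (norm_nonneg _) hc1)
    fin_cases i <;> fin_cases j <;> simp_all
  have hdet : ∀ v u : Fin 2 → ℚ_[p], ‖v 0 * u 1 - v 1 * u 0‖ = ‖v i * u j - v j * u i‖ := by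
    intro v u
    fin_cases i <;> fin_cases j
    · simp at hij
    · rfl
    · change ‖v 0 * u 1 - v 1 * u 0‖ = ‖v 1 * u 0 - v 0 * u 1‖
      rw [norm_sub_rev]
    · simp at hij
  unfold pdelta sdelta Ch
  rw [hmax _ hξ, hmax _ hη, hdet, PadicInt.norm_def, PadicInt.coe_sub, chv_pos p c i j _ hξ,
    chv_pos p c i j _ hη, ← norm_mul, ← norm_mul, ← norm_div]
  congr 1
  field_simp

lemma pdelta_comm (ξ η : P1 p) : pdelta p ξ η = pdelta p η ξ := by
  unfold pdelta sdelta
  rw [← norm_neg, mul_comm (max ‖ξ.rep 0‖ ‖ξ.rep 1‖)]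
  congr 2
  ring

lemma pdelta_nonneg (ξ η : P1 p) : 0 ≤ pdelta p ξ η := by
  unfold pdelta sdelta
  positivity

lemma pdelta_cross (ξ η : P1 p) (hξ : ξ ∈ RR p) (hη : η ∉ RR p) : pdelta p ξ η = 1 := by
  have h1 : ‖ξ.rep 0‖ ≤ ‖ξ.rep 1‖ := by
    have : ‖ξ.rep 0‖ ≤ ‖1 * ξ.rep 1‖ := hξ
    rwa [one_mul] at this
  have h2 : ‖η.rep 1‖ < ‖η.rep 0‖ := by
    have : ¬ ‖η.rep 0‖ ≤ ‖1 * η.rep 1‖ := hη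
    rwa [one_mul, not_le] at this
  have h3 : ξ.rep 1 ≠ 0 := by
    have := cond_ne' p 1 0 1 one_ne_zero (by decide) _ ξ.rep_nonzero hξ
    rwa [one_mul] at this
  have h4 : ‖ξ.rep 0 * η.rep 1‖ < ‖-(ξ.rep 1 * η.rep 0)‖ := by
    rw [norm_neg, norm_mul, norm_mul]
    have : 0 < ‖ξ.rep 1‖ := norm_pos_iff.2 h3
    calc _ ≤ ‖ξ.rep 1‖ * ‖η.rep 1‖ := by gcongr
      _ < _ := by gcongr
  unfold pdelta sdelta
  rw [sub_eq_add_neg, IsUltrametricDist.norm_add_eq_max_of_norm_ne_norm h4.ne, max_eq_right h4.le, max_eq_right h1,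
    max_eq_left h2.le, norm_neg, norm_mul]
  refine div_self (mul_ne_zero (norm_ne_zero_iff.2 h3) ?_)
  exact ((norm_nonneg _).trans_lt h2).ne'

variable (β : ℂ)

noncomputable def w0 (ξ η : P1 p) : ℂ := ((pdelta p ξ η : ℝ) : ℂ) ^ (β / 2)

lemma sq_half (d : ℝ) : ((d : ℂ) ^ (β / 2)) * ((d : ℂ) ^ (β / 2)) = (d : ℂ) ^ β := by
  by_cases hd : (d : ℂ) = 0
  · rw [hd]
    by_cases hb : β = 0
    · simp [hb]
    · rw [Complex.zero_cpow hb, Complex.zero_cpow (div_ne_zero hb two_ne_zero), zero_mul]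
  · rw [← Complex.cpow_add _ _ hd]
    congr 1; ring

lemma pairs_fw (N : ℕ) (x : Fin N → P1 p) :
    ∏ q ∈ pairs N, ((pdelta p (x q.1) (x q.2) : ℝ) : ℂ) ^ β = fw (w0 p β) x := by
  have e0 : fw (w0 p β) x = ∏ i, ∏ j, if i = j then 1 else w0 p β (x i) (x j) := by
    unfold fw
    refine Finset.prod_congr rfl fun i _ => Finset.prod_congr rfl fun j _ => ?_
    by_cases h : i = j
    · rw [if_pos h, if_pos h]
    · rw [if_neg h, if_neg h]
  rw [e0]
  unfold pairs
  rw [← Fintype.prod_prod_type' (f := fun i j => if i = j then 1 else w0 p β (x i) (x j)),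
    ← Finset.prod_filter_mul_prod_filter_not univ (fun q : Fin N × Fin N => q.1 < q.2),
    ← Finset.prod_filter_mul_prod_filter_not (univ.filter fun q : Fin N × Fin N => ¬ q.1 < q.2) (fun q : Fin N × Fin N => q.2 < q.1)]
  have e3 : ∏ q ∈ (univ.filter fun q : Fin N × Fin N => ¬ q.1 < q.2).filter (fun q => ¬ q.2 < q.1),
      (if q.1 = q.2 then 1 else w0 p β (x q.1) (x q.2)) = 1 := by
    refine Finset.prod_eq_one fun q hq => ?_
    simp only [Finset.mem_filter, Finset.mem_univ, true_and, not_lt] at hq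
    rw [if_pos (le_antisymm hq.2 hq.1)]
  have e2 : ∏ q ∈ (univ.filter fun q : Fin N × Fin N => ¬ q.1 < q.2).filter (fun q => q.2 < q.1),
      (if q.1 = q.2 then 1 else w0 p β (x q.1) (x q.2)) =
      ∏ q ∈ univ.filter (fun q : Fin N × Fin N => q.1 < q.2), w0 p β (x q.1) (x q.2) := by
    refine Finset.prod_nbij' Prod.swap Prod.swap ?_ ?_ ?_ ?_ ?_
    · intro q hq; simp at hq ⊢; exact hq.2
    · intro q hq; simp at hq ⊢; exact ⟨hq.le, hq⟩
    · intro q _; simp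
    · intro q _; simp
    · intro q hq
      simp at hq
      rw [if_neg hq.2.ne']
      unfold w0
      rw [pdelta_comm]; rfl
  have e1 : ∏ q ∈ univ.filter (fun q : Fin N × Fin N => q.1 < q.2),
      (if q.1 = q.2 then 1 else w0 p β (x q.1) (x q.2)) =
      ∏ q ∈ univ.filter (fun q : Fin N × Fin N => q.1 < q.2), w0 p β (x q.1) (x q.2) := by
    refine Finset.prod_congr rfl fun q hq => ?_
    simp at hq
    rw [if_neg hq.ne]
  rw [e3, e2, mul_one, e1, ← Finset.prod_mul_distrib]
  refine Finset.prod_congr rfl fun q _ => ?_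
  exact (sq_half β _).symm

lemma mu_ker : mu p {x | PadicInt.toZMod x = 0} = pinv p := by
  have hM : MeasurableSet {x : ℤ_[p] | PadicInt.toZMod x = 0} := by
    have : {x : ℤ_[p] | PadicInt.toZMod x = 0} = {x | ‖x - 0‖ < 1} := by
      ext x; simp only [Set.mem_ofPred_eq]; rw [norm_sub_lt]; simp
    rw [this]
    exact (isOpen_lt (by fun_prop) continuous_const).measurableSet
  conv_lhs => rw [mu_decomp]
  rw [Measure.finsetSum_apply, Finset.sum_eq_single 0]
  · unfold mua
    rw [Measure.smul_apply, Measure.map_apply (Sm_meas p 0) hM]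
    have : Sm p 0 ⁻¹' {x | PadicInt.toZMod x = 0} = Set.univ := by
      ext x; simp [toZMod_Sm]
    rw [this]
    simp [ENNReal.smul_def]
  · intro a _ ha
    have h : {x : ℤ_[p] | PadicInt.toZMod x = 0} ⊆ {x | ¬ PadicInt.toZMod x = a} := by
      intro x hx hx2
      exact ha (hx2.symm.trans hx)
    exact measure_mono_null h (mua_ae p a)
  · simp

noncomputable def Sw : Matrix (Fin 2) (Fin 2) ℚ_[p] := !![0, 1; 1, 0]

lemma Sw_sq : Sw p * Sw p = 1 := by
  ext i j; fin_cases i <;> fin_cases j <;> simp [Sw, Matrix.mul_apply]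

lemma Sw_pre : mobius p (Sw p) ⁻¹' (RR p ∩ Ch p 1 0 1 ⁻¹' {x | PadicInt.toZMod x = 0}) = (RR p)ᶜ := by
  ext ξ
  obtain ⟨a, ha, hr⟩ := rep_mobius p _ _ (Sw_sq p) ξ
  set u := (Sw p).mulVec ξ.rep with hu
  have u0 : u 0 = ξ.rep 1 := by simp [hu, Sw, Matrix.mulVec, dotProduct]
  have u1 : u 1 = ξ.rep 0 := by simp [hu, Sw, Matrix.mulVec, dotProduct]
  have e1 : mobius p (Sw p) ξ ∈ RR p ↔ ‖ξ.rep 1‖ ≤ ‖ξ.rep 0‖ := by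
    change ‖(mobius p (Sw p) ξ).rep 0‖ ≤ ‖1 * (mobius p (Sw p) ξ).rep 1‖ ↔ _
    rw [hr, cond_smul p 1 0 1 a ha, u0, u1, one_mul]
  have e2 : ξ ∈ (RR p)ᶜ ↔ ‖ξ.rep 1‖ < ‖ξ.rep 0‖ := by
    change ¬ ‖ξ.rep 0‖ ≤ ‖1 * ξ.rep 1‖ ↔ _
    rw [one_mul, not_le]
  rw [e2]
  simp only [Set.mem_preimage, Set.mem_inter_iff, e1, Set.mem_ofPred_eq]
  have e3 : ‖ξ.rep 1‖ ≤ ‖ξ.rep 0‖ → (PadicInt.toZMod (Ch p 1 0 1 (mobius p (Sw p) ξ)) = 0 ↔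
      ‖ξ.rep 1‖ < ‖ξ.rep 0‖) := by
    intro h
    have h0 : ξ.rep 0 ≠ 0 := by
      have := cond_ne' p 1 1 0 one_ne_zero (by decide) _ ξ.rep_nonzero (by rwa [one_mul])
      rwa [one_mul] at this
    have : Ch p 1 0 1 (mobius p (Sw p) ξ) = chv p 1 0 1 u := by
      unfold Ch; rw [hr, chv_smul p 1 0 1 a ha]
    rw [this, ← map_zero PadicInt.toZMod, ← norm_sub_lt, sub_zero, PadicInt.norm_def,
      chv_pos p 1 0 1 _ (by rw [u0, u1, one_mul]; exact h), u0, u1, one_mul, norm_div,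
      div_lt_one (norm_pos_iff.2 h0)]
  constructor
  · rintro ⟨h, h2⟩; exact (e3 h).1 h2
  · intro h; exact ⟨h.le, (e3 h.le).2 h⟩

lemma consts (ν : Measure (P1 p)) [IsProbabilityMeasure ν] (hν : IsGLInvariant p ν) :
    ∃ k : NNReal, (k : ℂ) = (p : ℂ) / (p + 1) ∧
      (ν.restrict (RR p)).map (Ch p 1 0 1) = k • mu p ∧
      (ν.restrict (RR p)ᶜ).map (Ch p p 1 0) = (k * pinv p) • mu p := by
  obtain ⟨k, h1, h2⟩ := map_Ch p 1 0 1 ν hν one_ne_zero (by simp) (by decide)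
  obtain ⟨k', h1', h2'⟩ := map_Ch p p 1 0 ν hν (p_ne p) (by
    rw [Padic.norm_p]; exact inv_le_one_of_one_le₀ (by exact_mod_cast (Fact.out : p.Prime).one_le)) (by decide)
  rw [← compl_RR] at h1' h2'
  have hm := (Ch_cont p 1 0 1 one_ne_zero (by decide)).measurable
  have hD := (Dom_open p 1 0 1 one_ne_zero (by decide)).measurableSet
  have hM : MeasurableSet {x : ℤ_[p] | PadicInt.toZMod x = 0} := by
    have : {x : ℤ_[p] | PadicInt.toZMod x = 0} = {x | ‖x - 0‖ < 1} := by
      ext x; simp only [Set.mem_ofPred_eq]; rw [norm_sub_lt]; simp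
    rw [this]
    exact (isOpen_lt (by fun_prop) continuous_const).measurableSet
  have h3 : ν (RR p)ᶜ = k * pinv p := by
    rw [← Sw_pre, nu_pre p ν hν (Sw p) (Sw p) (Sw_sq p) ?_ ?_ _ (hD.inter (hm hM)), Set.inter_comm,
      ← Measure.restrict_apply (hm hM), ← Measure.map_apply hm hM, h1, Measure.smul_apply, mu_ker]
    · simp [ENNReal.smul_def]
    · intro i j; fin_cases i <;> fin_cases j <;> simp [Sw]
    · simp [Sw, Matrix.det_fin_two]
  have hk' : k' = k * pinv p := by
    rw [h2'] at h3; exact_mod_cast h3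
  have hsum : k + k * pinv p = 1 := by
    have := prob_add_prob_compl (μ := ν) hD
    rw [h2, h3] at this
    exact_mod_cast this
  refine ⟨k, ?_, h1, by rw [h1', hk']⟩
  have hc : (k : ℂ) + k * (pinv p : ℂ) = 1 := by exact_mod_cast hsum
  have hp : (pinv p : ℂ) * p = 1 := by exact_mod_cast pinv_mul p
  have hp1 : (p : ℂ) + 1 ≠ 0 := by exact_mod_cast Nat.succ_ne_zero p
  rw [eq_div_iff hp1]
  linear_combination (p : ℂ) * hc - k * hp

lemma piece1 (ν : Measure (P1 p)) [IsProbabilityMeasure ν] (k : NNReal)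
    (h : (ν.restrict (RR p)).map (Ch p 1 0 1) = k • mu p) (n : ℕ) (hn : Int (wt p β) (mu p) n) :
    Int (w0 p β) (ν.restrict (RR p)) n ∧
    GG (w0 p β) (ν.restrict (RR p)) n = (k : ℂ) ^ n * GG (wt p β) (mu p) n := by
  have hD := (Dom_open p 1 0 1 one_ne_zero (by decide)).measurableSet
  have h1 := GG_map (wt p β) (wt_meas p β) (Ch p 1 0 1) (Ch_cont p 1 0 1 one_ne_zero (by decide)).measurable
    (w0 p β) 1 (ν.restrict (RR p)) (RR p) (ae_restrict_mem hD) (by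
      intro x hx y hy
      unfold w0 wt
      rw [pdelta_Dom p 1 0 1 one_ne_zero (by simp) (by decide) x y hx hy]
      simp) n
  have h2 := GG_smul (wt p β) k (mu p) n
  rw [h] at h1
  refine ⟨(h1.1 one_ne_zero).1 (h2.1 hn), ?_⟩
  rw [← h2.2, h1.2]
  simp

lemma piece2 (ν : Measure (P1 p)) [IsProbabilityMeasure ν] (k : NNReal)
    (h : (ν.restrict (RR p)ᶜ).map (Ch p p 1 0) = (k * pinv p) • mu p) (n : ℕ) (hn : Int (wt p β) (mu p) n) :
    Int (w0 p β) (ν.restrict (RR p)ᶜ) n ∧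
    GG (w0 p β) (ν.restrict (RR p)ᶜ) n / n.factorial = (k : ℂ) ^ n * PowerSeries.coeff n (fser p β) := by
  have hp1 : ‖(p : ℚ_[p])‖ ≤ 1 := by
    rw [Padic.norm_p]; exact inv_le_one_of_one_le₀ (by exact_mod_cast (Fact.out : p.Prime).one_le)
  have hD := (Dom_open p p 1 0 (p_ne p) (by decide)).measurableSet
  have hk := kap_ne p β
  rw [compl_RR] at h ⊢
  have h1 := GG_map (wt p β) (wt_meas p β) (Ch p p 1 0) (Ch_cont p p 1 0 (p_ne p) (by decide)).measurable
    (w0 p β) (kap p β)⁻¹ (ν.restrict (Dom p p 1 0)) (Dom p p 1 0) (ae_restrict_mem hD) (by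
      intro x hx y hy
      unfold w0
      rw [pdelta_Dom p p 1 0 (p_ne p) hp1 (by decide) x y hx hy, Padic.norm_p, wt_p, inv_mul_cancel_left₀ hk]) n
  have h2 := GG_smul (wt p β) (k * pinv p) (mu p) n
  rw [h] at h1
  refine ⟨(h1.1 (inv_ne_zero hk)).1 (h2.1 hn), ?_⟩
  have h3 := h1.2.symm.trans h2.2
  have h4 : GG (w0 p β) (ν.restrict (Dom p p 1 0)) n =
      (kap p β ^ (n - 1)) ^ n * ((((k * pinv p : NNReal) : ℝ) : ℂ) ^ n * GG (wt p β) (mu p) n) := by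
    rw [← h3, ← mul_assoc, ← mul_pow, ← mul_pow, mul_inv_cancel₀ hk]
    simp
  rw [h4]
  simp only [fser, PowerSeries.coeff_mk]
  push_cast
  rw [mul_pow]
  ring

end Fin

theorem statement_3 (p : ℕ) [Fact p.Prime]
    (ν : Measure (P1 p)) [IsProbabilityMeasure ν] (hν : IsGLInvariant p ν)
    (N : ℕ) (hN : 2 ≤ N) (β : ℂ) (hβ : -2 / (N : ℝ) < β.re) :
    Integrable
      (fun x : Fin N → P1 p => ∏ q ∈ pairs N, ((pdelta p (x q.1) (x q.2) : ℝ) : ℂ) ^ β)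
      (Measure.pi fun _ => ν) ∧
    ZP1 p ν N β =
      (N.factorial : ℂ) * ∑ k ∈ Finset.range (N + 1),
        Complex.cosh (((Real.log p : ℂ) / 2) * ((N : ℂ) + (N.choose 2 : ℂ) * β) *
              (1 - 2 * (k : ℂ) / (N : ℂ))) /
            (2 * Complex.cosh ((Real.log p : ℂ) / 2)) ^ N *
          F (N - k) (Real.log p) β * F k (Real.log p) β := by
  have hint := int_all p β N hβ
  have hD := (Dom_open p 1 0 1 one_ne_zero (by decide)).measurableSet
  obtain ⟨k, hk, h1, h2⟩ := consts p ν hν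
  have hsplit : ν.restrict (RR p) + ν.restrict (RR p)ᶜ = ν := Measure.restrict_add_restrict_compl hD
  have hfun : (fun x : Fin N → P1 p => ∏ q ∈ pairs N, ((pdelta p (x q.1) (x q.2) : ℝ) : ℂ) ^ β) =
      fw (w0 p β) := funext (pairs_fw p β N)
  have h := two_piece (w0 p β) (ν.restrict (RR p)) (ν.restrict (RR p)ᶜ) (RR p) (ae_restrict_mem hD)
    (ae_restrict_mem hD.compl) (by
      intro x hx y hy
      unfold w0
      rw [pdelta_comm p y x, pdelta_cross p x y hx hy]
      simp) (n := N) (fun l hl => (piece1 p β ν k h1 l (hint l hl)).1)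
      (fun l hl => (piece2 p β ν k h2 l (hint l hl)).1)
  rw [hsplit] at h
  refine ⟨by rw [hfun]; exact h.1, ?_⟩
  have hZ : ZP1 p ν N β = GG (w0 p β) ν N := by
    unfold ZP1 GG
    rw [hfun]
  have hf : (N.factorial : ℂ) ≠ 0 := by exact_mod_cast N.factorial_ne_zero
  rw [hZ, ← final_sum p β N (by omega) hβ, ← mul_div_cancel₀ (GG (w0 p β) ν N) hf, h.2, ← hk]
  congr 1
  rw [Finset.mul_sum]
  refine Finset.sum_congr rfl fun l hl => ?_
  have hl' : l ≤ N := by simpa [Nat.lt_succ_iff] using hl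
  rw [(piece1 p β ν k h1 l (hint l hl')).2, (piece2 p β ν k h2 (N - l) (hint _ (by omega))).2]
  have : (k : ℂ) ^ N = (k : ℂ) ^ l * (k : ℂ) ^ (N - l) := by rw [← pow_add]; congr 1; omega
  rw [this]
  ring


end LogCoulomb
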